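/- Fix ν, μ > 0 with 2μ + ν ≤ 1 and 2μ ≥ ν. For every ε > 0 there is a constant C_ε such that the following holds for every N > 1. Let I ⊂ [1,2] be an interval of length N^{-ν} and J ⊂ (−π/2, π/2) an interval of length N^{-μ}, and let S = {r(cos φ, sin φ) : r ∈ I, φ ∈ J} ⊂ A₁ be the corresponding sector of length N^{-ν} and aperture N^{-μ}. Partition J into M = ⌈N^{ν/2}⌉ consecutive intervals J₁, …, J_M of equal length, and let S'_j = {r(cos φ, sin φ) : r ∈ I, φ ∈ J_j} be the resulting sectors of aperture ≈ N^{-μ-ν/2}. Then for every bounded measurable g : A₁ → ℂ and every Euclidean ball B_N ⊂ ℝ³ of radius N centered at c, one has ‖E_S g‖_{L⁶(w_{B_N})} ≤ C_ε · N^{νε} · ( Σ_{j=1}^{M} ‖E_{S'_j} g‖²_{L⁶(w_{B_N})} )^{1/2}, where w_{B_N}(x) = (1 + |x − c|/N)^{−30}. -/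

import Mathlib

open MeasureTheory Real
open scoped ENNReal

noncomputable section

/-- The conical extension operator `E_R g(x) = ∫_R g(ξ) e(x₁ξ₁ + x₂ξ₂ + x₃√(ξ₁²+ξ₂²)) dξ`. -/
def coneExt (S : Set (ℝ × ℝ)) (g : ℝ × ℝ → ℂ) (x : EuclideanSpace ℝ (Fin 3)) : ℂ :=
  ∫ ξ in S, g ξ * Complex.exp (2 * Real.pi * Complex.I *
    (x 0 * ξ.1 + x 1 * ξ.2 + x 2 * Real.sqrt (ξ.1 ^ 2 + ξ.2 ^ 2)))

/-- The sector of the plane with radii in `I` and angles in `J`. -/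
def sector (I J : Set ℝ) : Set (ℝ × ℝ) :=
  {p | ∃ r ∈ I, ∃ φ ∈ J, p = (r * Real.cos φ, r * Real.sin φ)}

/-- The weighted `L⁶(w_{B_N})` norm, with weight `w(x) = (1+|x-c|/N)^{-30}`. -/
def wNorm6 (F : EuclideanSpace ℝ (Fin 3) → ℂ) (c : EuclideanSpace ℝ (Fin 3)) (N : ℝ) : ℝ≥0∞ :=
  (∫⁻ x, (‖F x‖₊ : ℝ≥0∞) ^ (6 : ℝ) *
      ENNReal.ofReal ((1 + dist x c / N) ^ (-(30 : ℝ)))) ^ (1 / 6 : ℝ)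

/-!
Look at the plane through a point of space spanned by the direction tangent to the cone at the edge
of the sector and by the normal to the cone there. Since `ν ≤ 2 * μ`, the rescaled frequencies
`(ξ₁ / M, ξ₂)` of the `j`-th piece in this plane stay within bounded distance of `(j, j ^ 2)`,
measured in a frame tangent to the parabola at this point. Averaging over the plane against a
rapidly decaying measure with compactly supported Fourier transform thus makes the `M` pieces
orthogonal in `L⁶` in the way frequencies on a parabola are.

For such families, decoupling follows by efficient bilinear congruencing at `q`-adic scales. Let
`f` and `g` live on separated windows of a parent of length `D`, that of `g` having length `H`. In
`∫ |f| ^ 2 * |g| ^ 4` orthogonality allows `f` to be cut into windows of length `H ^ 2 / D`, and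
Hölder's inequality then exchanges the roles of `f` and `g` at the cost of a linear bound. For `q`
fixed and large, a fixed number of iterations gains enough over the trivial bilinear bound for a
broad–narrow argument to improve the linear bound.

The shifts in the plane have size at most a multiple of `N ^ (2 * μ + ν) ≤ N`, up to factors which
the decay of the measure absorbs, so they do not affect the weight at scale `N`: integrating the
planar inequality over the base point, with Minkowski's inequality for the `ℓ²` sum, gives the
weighted one.
-/

namespace ConeDecoupling

/-! ## Almost orthogonality and integral inequalities -/

section AlmostOrthogonality

lemma norm_sum_sq_le_of_near {ι 𝕜 E : Type*} [RCLike 𝕜] [NormedAddCommGroup E]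
    [InnerProductSpace 𝕜 E] (s : Finset ι) (v : ι → E) (near : ι → ι → Prop) [DecidableRel near]
    (near_symm : ∀ a b, near a b → near b a) {D : ℝ}
    (hD : ∀ a ∈ s, ((s.filter (near a)).card : ℝ) ≤ D)
    (horth : ∀ a ∈ s, ∀ b ∈ s, ¬ near a b → inner 𝕜 (v a) (v b) = 0) :
    ‖∑ a ∈ s, v a‖ ^ 2 ≤ D * ∑ a ∈ s, ‖v a‖ ^ 2 := by
  have hpair : ∀ a ∈ s, ∀ b ∈ s, RCLike.re (inner 𝕜 (v a) (v b)) ≤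
      (if near a b then ‖v a‖ ^ 2 / 2 else 0) + (if near b a then ‖v b‖ ^ 2 / 2 else 0) := by
    intro a ha b hb
    by_cases hab : near a b
    · rw [if_pos hab, if_pos (near_symm a b hab)]
      have := re_inner_le_norm (𝕜 := 𝕜) (v a) (v b)
      nlinarith [sq_nonneg (‖v a‖ - ‖v b‖)]
    · rw [horth a ha b hb hab, if_neg hab, if_neg fun h => hab (near_symm b a h)]
      simp
  have hrow : ∑ a ∈ s, ∑ b ∈ s, (if near a b then ‖v a‖ ^ 2 / 2 else 0) ≤
      D / 2 * ∑ a ∈ s, ‖v a‖ ^ 2 := by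
    rw [Finset.mul_sum]
    refine Finset.sum_le_sum fun a ha => ?_
    rw [← Finset.sum_filter, Finset.sum_const, nsmul_eq_mul]
    nlinarith [hD a ha, sq_nonneg ‖v a‖]
  calc ‖∑ a ∈ s, v a‖ ^ 2 = ∑ a ∈ s, ∑ b ∈ s, RCLike.re (inner 𝕜 (v a) (v b)) := by
        simp only [← inner_self_eq_norm_sq (𝕜 := 𝕜), sum_inner, inner_sum, map_sum]
        exact Finset.sum_comm
    _ ≤ ∑ a ∈ s, ∑ b ∈ s, ((if near a b then ‖v a‖ ^ 2 / 2 else 0) +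
          (if near b a then ‖v b‖ ^ 2 / 2 else 0)) :=
        Finset.sum_le_sum fun a ha => Finset.sum_le_sum fun b hb => hpair a ha b hb
    _ = 2 * ∑ a ∈ s, ∑ b ∈ s, (if near a b then ‖v a‖ ^ 2 / 2 else 0) := by
        simp only [Finset.sum_add_distrib]
        rw [Finset.sum_comm (f := fun a b => if near b a then ‖v b‖ ^ 2 / 2 else 0), two_mul]
    _ ≤ D * ∑ a ∈ s, ‖v a‖ ^ 2 := by linarith

variable {X : Type*} [MeasurableSpace X] {W : Measure X}

lemma norm_toLp_two_sq {f : X → ℂ} (hf : MemLp f 2 W) : ‖hf.toLp f‖ ^ 2 = ∫ x, ‖f x‖ ^ 2 ∂W := by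
  rw [← inner_self_eq_norm_sq (𝕜 := ℂ), L2.inner_def]
  have hself : ∀ᵐ x ∂W, inner ℂ (hf.toLp f x) (hf.toLp f x) = ((‖f x‖ ^ 2 : ℝ) : ℂ) := by
    filter_upwards [hf.coeFn_toLp] with x hx
    rw [hx, inner_self_eq_norm_sq_to_K]
    push_cast
    rfl
  rw [integral_congr_ae hself, integral_complex_ofReal]
  exact Complex.ofReal_re _

lemma integral_norm_sum_sq_le_of_near {ι : Type*} (s : Finset ι) {G : ι → X → ℂ}
    (hG : ∀ a ∈ s, MemLp (G a) 2 W) (near : ι → ι → Prop) [DecidableRel near]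
    (near_symm : ∀ a b, near a b → near b a) {D : ℝ}
    (hD : ∀ a ∈ s, ((s.filter (near a)).card : ℝ) ≤ D)
    (horth : ∀ a ∈ s, ∀ b ∈ s, ¬ near a b →
      ∫ x, G b x * starRingEnd ℂ (G a x) ∂W = 0) :
    ∫ x, ‖∑ a ∈ s, G a x‖ ^ 2 ∂W ≤ D * ∑ a ∈ s, ∫ x, ‖G a x‖ ^ 2 ∂W := by
  classical
  set v : ι → Lp ℂ 2 W := fun a => if h : MemLp (G a) 2 W then h.toLp (G a) else 0
  have hva : ∀ a (ha : a ∈ s), v a = (hG a ha).toLp (G a) := fun a ha => dif_pos (hG a ha)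
  have hcoe : ∀ a ∈ s, v a =ᵐ[W] G a := fun a ha => by
    rw [hva a ha]
    exact (hG a ha).coeFn_toLp
  have hsum : ‖∑ a ∈ s, v a‖ ^ 2 = ∫ x, ‖∑ a ∈ s, G a x‖ ^ 2 ∂W := by
    rw [← norm_toLp_two_sq (memLp_finsetSum s hG)]
    congr 2
    refine Lp.ext ?_
    refine ((Lp.coeFn_finsetSum s v).trans ?_).trans (MemLp.coeFn_toLp _).symm
    filter_upwards [(Filter.eventually_all_finset s).2 hcoe] with x hx
    rw [Finset.sum_apply]
    exact Finset.sum_congr rfl hx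
  have hbound := norm_sum_sq_le_of_near (𝕜 := ℂ) s v near near_symm hD fun a ha b hb hab => by
    rw [L2.inner_def, ← horth a ha b hb hab]
    refine integral_congr_ae ?_
    filter_upwards [hcoe a ha, hcoe b hb] with x hxa hxb
    rw [hxa, hxb]
    rfl
  rw [hsum] at hbound
  refine hbound.trans_eq ?_
  congr 1
  refine Finset.sum_congr rfl fun a ha => ?_
  rw [hva a ha, norm_toLp_two_sq]

lemma card_filter_abs_sub_le (s : Finset ℕ) (R a : ℕ) :
    (s.filter fun b : ℕ => |(a : ℤ) - b| ≤ R).card ≤ 2 * R + 1 := by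
  have hsub : (s.filter fun b : ℕ => |(a : ℤ) - b| ≤ R) ⊆ Finset.Icc (a - R) (a + R) := by
    intro b hb
    rw [Finset.mem_filter, abs_le] at hb
    rw [Finset.mem_Icc]
    omega
  refine (Finset.card_le_card hsub).trans ?_
  rw [Nat.card_Icc]
  omega

lemma integral_norm_sum_sq_le_of_gap {s : Finset ℕ} {G : ℕ → X → ℂ}
    (hG : ∀ a ∈ s, MemLp (G a) 2 W) (R : ℕ)
    (horth : ∀ a ∈ s, ∀ b ∈ s, (R : ℤ) < |(a : ℤ) - b| →
      ∫ x, G a x * starRingEnd ℂ (G b x) ∂W = 0) :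
    ∫ x, ‖∑ a ∈ s, G a x‖ ^ 2 ∂W ≤ (2 * R + 1) * ∑ a ∈ s, ∫ x, ‖G a x‖ ^ 2 ∂W := by
  refine integral_norm_sum_sq_le_of_near s hG (fun a b => |(a : ℤ) - b| ≤ R)
    (fun a b h => by rwa [abs_sub_comm]) (fun a _ => ?_)
    fun a ha b hb hab => horth b hb a ha (by rw [abs_sub_comm]; exact not_le.1 hab)
  exact_mod_cast card_filter_abs_sub_le s R a

end AlmostOrthogonality

section IntegralInequalities

variable {X : Type*} [MeasurableSpace X] {W : Measure X} {f h : X → ℂ}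

lemma pow_mul_pow_le_pow_add_pow {x y : ℝ} (hx : 0 ≤ x) (hy : 0 ≤ y) (a b : ℕ) :
    x ^ a * y ^ b ≤ x ^ (a + b) + y ^ (a + b) := by
  rcases le_total x y with hxy | hxy
  · calc x ^ a * y ^ b ≤ y ^ a * y ^ b := by gcongr
      _ = y ^ (a + b) := (pow_add y a b).symm
      _ ≤ x ^ (a + b) + y ^ (a + b) := le_add_of_nonneg_left (by positivity)
  · calc x ^ a * y ^ b ≤ x ^ a * x ^ b := by gcongr
      _ = x ^ (a + b) := (pow_add x a b).symm
      _ ≤ x ^ (a + b) + y ^ (a + b) := le_add_of_nonneg_right (by positivity)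

lemma integrable_norm_pow_six (hf : MemLp f 6 W) : Integrable (fun x => ‖f x‖ ^ 6) W :=
  MemLp.integrable_norm_pow (p := 6) (mod_cast hf) (by norm_num)

lemma integrable_norm_pow_mul_norm_pow (hf : MemLp f 6 W) (hh : MemLp h 6 W) {a b : ℕ}
    (hab : a + b = 6) : Integrable (fun x => ‖f x‖ ^ a * ‖h x‖ ^ b) W := by
  refine ((integrable_norm_pow_six hf).add (integrable_norm_pow_six hh)).mono'
    ((hf.1.norm.pow a).mul (hh.1.norm.pow b)) (Filter.Eventually.of_forall fun x => ?_)
  rw [Real.norm_of_nonneg (by positivity)]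
  simpa only [hab, Pi.add_apply] using
    pow_mul_pow_le_pow_add_pow (norm_nonneg (f x)) (norm_nonneg (h x)) a b

lemma memLp_two_mul_mul {k : X → ℂ} (hf : MemLp f 6 W) (hh : MemLp h 6 W) (hk : MemLp k 6 W) :
    MemLp (fun x => f x * h x * k x) 2 W := by
  have : ENNReal.HolderTriple 6 6 3 := ⟨by
    rw [← ENNReal.toReal_eq_toReal_iff' (by simp) (by simp), ENNReal.toReal_add (by simp) (by simp)]
    norm_num⟩
  have : ENNReal.HolderTriple 3 6 2 := ⟨by
    rw [← ENNReal.toReal_eq_toReal_iff' (by simp) (by simp), ENNReal.toReal_add (by simp) (by simp)]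
    norm_num⟩
  exact hk.mul (hh.mul hf (r := 3))

lemma integrable_mul_conj {F G : X → ℂ} (hF : MemLp F 2 W) (hG : MemLp G 2 W) :
    Integrable (fun x => F x * starRingEnd ℂ (G x)) W :=
  hF.integrable_mul hG.star

lemma sq_integral_mul_le {u v : X → ℝ} (hu : MemLp u 2 W) (hv : MemLp v 2 W) :
    (∫ x, u x * v x ∂W) ^ 2 ≤ (∫ x, u x ^ 2 ∂W) * ∫ x, v x ^ 2 ∂W := by
  have hquad : ∀ t : ℝ, 0 ≤ (∫ x, u x ^ 2 ∂W) * (t * t) + (-2 * ∫ x, u x * v x ∂W) * t +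
      ∫ x, v x ^ 2 ∂W := fun t => by
    have hexp : ∫ x, (t * u x - v x) ^ 2 ∂W = (∫ x, u x ^ 2 ∂W) * (t * t) +
        (-2 * ∫ x, u x * v x ∂W) * t + ∫ x, v x ^ 2 ∂W := by
      have hint : ∀ x, (t * u x - v x) ^ 2 =
          u x ^ 2 * (t * t) + u x * v x * (-2 * t) + v x ^ 2 := fun x => by ring
      have iuu : Integrable (fun x => u x ^ 2 * (t * t)) W := hu.integrable_sq.mul_const _
      have iuv : Integrable (fun x => u x * v x * (-2 * t)) W := (hu.integrable_mul hv).mul_const _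
      have isum : Integrable (fun x => u x ^ 2 * (t * t) + u x * v x * (-2 * t)) W := iuu.add iuv
      simp_rw [hint]
      rw [integral_add isum hv.integrable_sq, integral_add iuu iuv, integral_mul_const,
        integral_mul_const]
      ring
    rw [← hexp]
    exact integral_nonneg fun x => sq_nonneg _
  have := discrim_le_zero hquad
  unfold discrim at this
  linarith

lemma sq_integral_norm_sq_mul_norm_pow_four_le (hf : MemLp f 6 W) (hh : MemLp h 6 W) :
    (∫ x, ‖f x‖ ^ 2 * ‖h x‖ ^ 4 ∂W) ^ 2 ≤
      (∫ x, ‖h x‖ ^ 2 * ‖f x‖ ^ 4 ∂W) * ∫ x, ‖h x‖ ^ 6 ∂W := by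
  have hu : MemLp (fun x => ‖h x‖ * ‖f x‖ ^ 2) 2 W := by
    refine (memLp_two_iff_integrable_sq (hh.1.norm.mul (hf.1.norm.pow 2))).2 ?_
    refine (integrable_norm_pow_mul_norm_pow hh hf (a := 2) (b := 4) rfl).congr
      (Filter.Eventually.of_forall fun x => ?_)
    change _ = (‖h x‖ * ‖f x‖ ^ 2) ^ 2
    ring
  have hv : MemLp (fun x => ‖h x‖ ^ 3) 2 W := by
    refine (memLp_two_iff_integrable_sq (hh.1.norm.pow 3)).2 ?_
    refine (integrable_norm_pow_six hh).congr (Filter.Eventually.of_forall fun x => ?_)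
    change _ = (‖h x‖ ^ 3) ^ 2
    ring
  convert sq_integral_mul_le hu hv using 2
  · exact congrArg _ (funext fun x => by ring)
  · exact congrArg _ (funext fun x => by ring)
  · exact congrArg _ (funext fun x => by ring)

lemma integral_norm_sq_mul_norm_pow_four_le (hf : MemLp f 6 W) (hh : MemLp h 6 W) {S T : ℝ}
    (hS : 0 ≤ S) (hfS : ∫ x, ‖f x‖ ^ 6 ∂W ≤ S ^ 3)
    (hhT : ∫ x, ‖h x‖ ^ 6 ∂W ≤ T ^ 3) :
    ∫ x, ‖f x‖ ^ 2 * ‖h x‖ ^ 4 ∂W ≤ S * T ^ 2 := by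
  set a := ∫ x, ‖f x‖ ^ 2 * ‖h x‖ ^ 4 ∂W
  set b := ∫ x, ‖h x‖ ^ 2 * ‖f x‖ ^ 4 ∂W
  have ha : 0 ≤ a := integral_nonneg fun x => by positivity
  have hb : 0 ≤ b := integral_nonneg fun x => by positivity
  have hab : a ^ 2 ≤ b * T ^ 3 := (sq_integral_norm_sq_mul_norm_pow_four_le hf hh).trans
    (mul_le_mul_of_nonneg_left hhT hb)
  have hba : b ^ 2 ≤ a * S ^ 3 := (sq_integral_norm_sq_mul_norm_pow_four_le hh hf).trans
    (mul_le_mul_of_nonneg_left hfS ha)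
  have hpow : a * a ^ 3 ≤ a * (S * T ^ 2) ^ 3 :=
    calc a * a ^ 3 = (a ^ 2) ^ 2 := by ring
      _ ≤ (b * T ^ 3) ^ 2 := by gcongr
      _ = b ^ 2 * T ^ 6 := by ring
      _ ≤ a * S ^ 3 * T ^ 6 := by gcongr
      _ = a * (S * T ^ 2) ^ 3 := by ring
  rcases ha.eq_or_lt with ha0 | ha0
  · rw [← ha0]
    positivity
  · exact le_of_pow_le_pow_left₀ three_ne_zero (by positivity) (le_of_mul_le_mul_left hpow ha0)

end IntegralInequalities

/-! ## Windows of integers -/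

section Windows

/-- The block of `m` consecutive integers starting at `p`. -/
def window (p : ℤ) (m : ℕ) : Finset ℤ := Finset.Ico p (p + m)

lemma mem_window {p j : ℤ} {m : ℕ} : j ∈ window p m ↔ p ≤ j ∧ j < p + m := Finset.mem_Ico

lemma sum_window_mul {A : Type*} [AddCommMonoid A] (g : ℤ → A) (p : ℤ) (a b : ℕ) :
    ∑ j ∈ window p (a * b), g j =
      ∑ k ∈ Finset.range a, ∑ j ∈ window (p + k * b) b, g j := by
  induction a with
  | zero => simp [window]
  | succ a ih =>
    have hunion : window p ((a + 1) * b) = window p (a * b) ∪ window (p + a * b) b := by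
      ext j
      simp only [mem_window, Finset.mem_union]
      push_cast
      have : (0 : ℤ) ≤ a * b := by positivity
      grind
    have hdisj : Disjoint (window p (a * b)) (window (p + a * b) b) := by
      rw [Finset.disjoint_left]
      intro j
      simp only [mem_window]
      push_cast
      omega
    rw [hunion, Finset.sum_union hdisj, ih, Finset.sum_range_succ]

lemma window_subset_window_mul {p : ℤ} {k a b : ℕ} (hk : k < a) :
    window (p + k * b) b ⊆ window p (a * b) := by
  intro j
  simp only [mem_window]
  push_cast
  have hhi : ((k : ℤ) + 1) * b ≤ a * b :=
    mul_le_mul_of_nonneg_right (by exact_mod_cast hk) (by positivity)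
  grind

/-- The index sets `I` and `J` lie on one side of each other, at distances between `d` and `D`. -/
def Separated (d D : ℤ) (I J : Finset ℤ) : Prop :=
  (∀ i ∈ I, ∀ j ∈ J, d ≤ i - j ∧ i - j ≤ D) ∨ (∀ i ∈ I, ∀ j ∈ J, d ≤ j - i ∧ j - i ≤ D)

lemma Separated.symm {d D : ℤ} {I J : Finset ℤ} (h : Separated d D I J) : Separated d D J I :=
  h.elim (fun h => .inr fun j hj i hi => h i hi j hj) fun h => .inl fun j hj i hi => h i hi j hj

lemma Separated.mono_left {d D : ℤ} {I I' J : Finset ℤ} (h : Separated d D I J) (hI : I' ⊆ I) :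
    Separated d D I' J :=
  h.imp (fun h i hi => h i (hI hi)) fun h i hi => h i (hI hi)

lemma separated_window_of_add_two_le {p : ℤ} {q Q k l : ℕ} (hk : k < q) (hlk : l + 2 ≤ k) :
    Separated Q (q * Q) (window (p + k * Q) Q) (window (p + l * Q) Q) := by
  refine .inl fun i hi j hj => ?_
  rw [mem_window] at hi hj
  have hkq : ((k : ℤ) + 1) * Q ≤ q * Q := by gcongr; exact_mod_cast hk
  have hlk' : ((l : ℤ) + 2) * Q ≤ k * Q := by gcongr; exact_mod_cast hlk
  have hl : (0 : ℤ) ≤ l * Q := by positivity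
  constructor <;> linarith

end Windows

/-! ## The energy and the orthogonality hypothesis -/

section Orthogonality

variable {X : Type*} [MeasurableSpace X] (W : Measure X)

/-- The right-hand side of an `ℓ²` decoupling inequality: `∑_{j ∈ I} ‖f j‖²_{L⁶(W)}`. -/
def energy (f : ℤ → X → ℂ) (I : Finset ℤ) : ℝ :=
  ∑ j ∈ I, (∫ x, ‖f j x‖ ^ 6 ∂W) ^ (1 / 3 : ℝ)

/-- The orthogonality which a family with frequencies near the points `(j, j²)` of a parabola has
in `L⁶`: the product `f a * f b * f c` is orthogonal to `f a' * f b' * f c'` as soon as the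
quadratic frequency of the sextuple, recentred at `b`, is more than `L` times the total spread. -/
def ParabolicallyOrthogonalOn (L : ℕ) (f : ℤ → X → ℂ) (I : Set ℤ) : Prop :=
  ∀ a ∈ I, ∀ b ∈ I, ∀ c ∈ I, ∀ a' ∈ I, ∀ b' ∈ I, ∀ c' ∈ I,
    (L : ℤ) * (6 + |a - b| + |c - b| + |a' - b| + |b' - b| + |c' - b|) <
      |(a - b) ^ 2 + (c - b) ^ 2 - (a' - b) ^ 2 - (b' - b) ^ 2 - (c' - b) ^ 2| →
    ∫ x, (f a x * f b x * f c x) * starRingEnd ℂ (f a' x * f b' x * f c' x) ∂W = 0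

variable {W} {f : ℤ → X → ℂ}

lemma energy_nonneg (I : Finset ℤ) : 0 ≤ energy W f I :=
  Finset.sum_nonneg fun _ _ => Real.rpow_nonneg (integral_nonneg fun _ => by positivity) _

lemma energy_window_mul (p : ℤ) (a b : ℕ) :
    energy W f (window p (a * b)) =
      ∑ k ∈ Finset.range a, energy W f (window (p + k * b) b) :=
  sum_window_mul _ p a b

lemma parabolic_gap {L q Q H H' u v x y z : ℤ} (hL : 0 ≤ L) (hq : 0 < q) (hQ : 0 < Q)
    (hH' : 0 < H') (hHH' : H' * (q * Q) = H ^ 2) (hH : H ≤ q * Q) (hu : |u| ≤ q * Q)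
    (hv : |v| ≤ q * Q) (huv : 2 * Q ≤ |u + v|) (hx : |x| ≤ H) (hy : |y| ≤ H) (hz : |z| ≤ H)
    (hgap : (2 + 6 * L) * q * H' ≤ |u - v|) :
    L * (6 + |u| + |x| + |v| + |y| + |z|) < |u ^ 2 + x ^ 2 - v ^ 2 - y ^ 2 - z ^ 2| := by
  have hn : 1 ≤ q * Q := Order.one_le_iff_pos.2 (mul_pos hq hQ)
  have hspread : L * (6 + |u| + |x| + |v| + |y| + |z|) ≤ L * (11 * (q * Q)) :=
    mul_le_mul_of_nonneg_left (by linarith) hL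
  have hmain : (2 + 6 * L) * q * H' * (2 * Q) ≤ |u ^ 2 - v ^ 2| := by
    rw [show u ^ 2 - v ^ 2 = (u - v) * (u + v) by ring, abs_mul]
    exact mul_le_mul hgap huv (by positivity) (abs_nonneg _)
  have hsq : ∀ t : ℤ, |t| ≤ H → t ^ 2 ≤ H ^ 2 := fun t ht => by
    rw [← sq_abs t]
    exact pow_le_pow_left₀ (abs_nonneg _) ht 2
  have herror : |u ^ 2 - v ^ 2| - 2 * H ^ 2 ≤ |u ^ 2 + x ^ 2 - v ^ 2 - y ^ 2 - z ^ 2| := by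
    have := hsq x hx
    have := hsq y hy
    have := hsq z hz
    rw [sub_le_iff_le_add, abs_le]
    constructor
    · linarith [neg_abs_le (u ^ 2 + x ^ 2 - v ^ 2 - y ^ 2 - z ^ 2), sq_nonneg x, sq_nonneg y,
        sq_nonneg z]
    · linarith [le_abs_self (u ^ 2 + x ^ 2 - v ^ 2 - y ^ 2 - z ^ 2), sq_nonneg x, sq_nonneg y,
        sq_nonneg z]
  have hLH' : L * (q * Q) ≤ L * (q * Q) * H' := le_mul_of_one_le_right (by positivity) hH'
  have hH2 : 0 < H' * (q * Q) := by positivity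
  have hLqQ : 0 ≤ L * (q * Q) := by positivity
  linarith [show (2 + 6 * L) * q * H' * (2 * Q) = 4 * (H' * (q * Q)) + 12 * (L * (q * Q) * H') by
    ring]

lemma abs_sub_le_of_mem_window {p i j : ℤ} {m : ℕ} (hi : i ∈ window p m) (hj : j ∈ window p m) :
    |i - j| ≤ m := by
  rw [mem_window] at hi hj
  rw [abs_le]
  constructor <;> linarith

lemma integral_trilinear_mul_conj_eq_zero (hf : ∀ j, MemLp (f j) 6 W) {I I' J : Finset ℤ}
    (horth : ∀ a ∈ I, ∀ b ∈ J, ∀ c ∈ J, ∀ a' ∈ I', ∀ b' ∈ J, ∀ c' ∈ J,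
      ∫ x, (f a x * f b x * f c x) * starRingEnd ℂ (f a' x * f b' x * f c' x) ∂W = 0) :
    ∫ x, ((∑ j ∈ I, f j x) * (∑ j ∈ J, f j x) * ∑ j ∈ J, f j x) *
      starRingEnd ℂ ((∑ j ∈ I', f j x) * (∑ j ∈ J, f j x) * ∑ j ∈ J, f j x) ∂W = 0 := by
  have hexpand : ∀ (I : Finset ℤ) x, (∑ j ∈ I, f j x) * (∑ j ∈ J, f j x) * ∑ j ∈ J, f j x =
      ∑ τ ∈ (I ×ˢ J) ×ˢ J, f τ.1.1 x * f τ.1.2 x * f τ.2 x := fun I x => by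
    rw [Finset.sum_mul_sum, ← Finset.sum_product', Finset.sum_mul_sum, ← Finset.sum_product']
  have hint : ∀ τ σ : (ℤ × ℤ) × ℤ, Integrable (fun x => (f τ.1.1 x * f τ.1.2 x * f τ.2 x) *
      starRingEnd ℂ (f σ.1.1 x * f σ.1.2 x * f σ.2 x)) W := fun τ σ =>
    integrable_mul_conj (memLp_two_mul_mul (hf _) (hf _) (hf _))
      (memLp_two_mul_mul (hf _) (hf _) (hf _))
  simp_rw [hexpand, map_sum, Finset.sum_mul_sum]
  rw [integral_finsetSum _ fun τ _ => integrable_finsetSum _ fun σ _ => hint τ σ]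
  refine Finset.sum_eq_zero fun τ hτ => ?_
  rw [integral_finsetSum _ fun σ _ => hint τ σ]
  refine Finset.sum_eq_zero fun σ hσ => ?_
  simp only [Finset.mem_product] at hτ hσ
  exact horth _ hτ.1.1 _ hτ.1.2 _ hτ.2 _ hσ.1.1 _ hσ.1.2 _ hσ.2

/-- The number of children of a window that can interact with a given child, in the bilinear
inequality between windows separated at scale `q`. -/
def overlap (L q : ℕ) : ℕ := 2 * ((2 + 6 * L) * q + 1) + 1

lemma sep_mul_le_abs_sub {p i j : ℤ} {a b H R : ℕ} (hi : i ∈ window (p + a * H) H)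
    (hj : j ∈ window (p + b * H) H) (hab : ((R + 1 : ℕ) : ℤ) < |(a : ℤ) - b|) :
    (R : ℤ) * H ≤ |i - j| := by
  rw [mem_window] at hi hj
  push_cast at hab
  rcases lt_abs.1 hab with h | h
  · exact le_trans (by nlinarith) (le_abs_self _)
  · exact le_trans (by nlinarith) (neg_le_abs _)

lemma integral_trilinear_window_eq_zero {L q Q H H' m : ℕ} (hf : ∀ j, MemLp (f j) 6 W)
    (hO : ParabolicallyOrthogonalOn W L f Set.univ) (hq : 0 < q) (hQ : 0 < Q) (hH' : 0 < H')
    (hHH' : H' * (q * Q) = H ^ 2) (hH : H ≤ q * Q) {p p' : ℤ}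
    (hsep : Separated Q (q * Q) (window p (m * H')) (window p' H)) {k l : ℕ} (hk : k < m)
    (hl : l < m) (hkl : (((2 + 6 * L) * q + 1 : ℕ) : ℤ) < |(k : ℤ) - l|) :
    ∫ x, ((∑ j ∈ window (p + k * H') H', f j x) * (∑ j ∈ window p' H, f j x) *
        ∑ j ∈ window p' H, f j x) * starRingEnd ℂ ((∑ j ∈ window (p + l * H') H', f j x) *
          (∑ j ∈ window p' H, f j x) * ∑ j ∈ window p' H, f j x) ∂W = 0 := by
  refine integral_trilinear_mul_conj_eq_zero hf fun a ha b hb c hc a' ha' b' hb' c' hc' =>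
    hO _ trivial _ trivial _ trivial _ trivial _ trivial _ trivial ?_
  have hgap := sep_mul_le_abs_sub ha ha' hkl
  rw [← sub_sub_sub_cancel_right a a' b] at hgap
  have hsides : |a - b| ≤ q * Q ∧ |a' - b| ≤ q * Q ∧ 2 * (Q : ℤ) ≤ |(a - b) + (a' - b)| := by
    rcases hsep with h | h
    · have := h a (window_subset_window_mul hk ha) b hb
      have := h a' (window_subset_window_mul hl ha') b hb
      grind
    · have := h a (window_subset_window_mul hk ha) b hb
      have := h a' (window_subset_window_mul hl ha') b hb
      grind
  refine parabolic_gap (q := q) (Q := Q) (H := H) (H' := H') (by positivity) (mod_cast hq)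
    (mod_cast hQ) (mod_cast hH') (mod_cast hHH') (mod_cast hH) hsides.1 hsides.2.1 hsides.2.2
    (abs_sub_le_of_mem_window hc hb) (abs_sub_le_of_mem_window hb' hb)
    (abs_sub_le_of_mem_window hc' hb) (by push_cast at hgap; exact hgap)

lemma integral_norm_sq_window_mul_norm_pow_four_le {L q Q H H' m : ℕ} (hf : ∀ j, MemLp (f j) 6 W)
    (hO : ParabolicallyOrthogonalOn W L f Set.univ) (hq : 0 < q) (hQ : 0 < Q) (hH' : 0 < H')
    (hHH' : H' * (q * Q) = H ^ 2) (hH : H ≤ q * Q) {p p' : ℤ}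
    (hsep : Separated Q (q * Q) (window p (m * H')) (window p' H)) :
    ∫ x, ‖∑ j ∈ window p (m * H'), f j x‖ ^ 2 * ‖∑ j ∈ window p' H, f j x‖ ^ 4 ∂W ≤
      overlap L q * ∑ k ∈ Finset.range m,
        ∫ x, ‖∑ j ∈ window (p + k * H') H', f j x‖ ^ 2 * ‖∑ j ∈ window p' H, f j x‖ ^ 4 ∂W := by
  have hF : ∀ I : Finset ℤ, MemLp (fun x => ∑ j ∈ I, f j x) 6 W := fun I =>
    memLp_finsetSum I fun j _ => hf j
  have hcut := integral_norm_sum_sq_le_of_gap (s := Finset.range m)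
    (G := fun k x => (∑ j ∈ window (p + k * H') H', f j x) * (∑ j ∈ window p' H, f j x) *
      ∑ j ∈ window p' H, f j x)
    (fun k _ => memLp_two_mul_mul (hF _) (hF _) (hF _)) ((2 + 6 * L) * q + 1)
    fun k hk l hl => integral_trilinear_window_eq_zero hf hO hq hQ hH' hHH' hH hsep
      (Finset.mem_range.1 hk) (Finset.mem_range.1 hl)
  have hnorm : ∀ u v : ℂ, ‖u * v * v‖ ^ 2 = ‖u‖ ^ 2 * ‖v‖ ^ 4 := fun u v => by
    rw [norm_mul, norm_mul]
    ring
  simp only [← Finset.sum_mul, ← sum_window_mul, hnorm] at hcut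
  exact_mod_cast hcut

end Orthogonality

/-! ## Linear and bilinear bounds at `q`-adic scales -/

section Bounds

variable {X : Type*} [MeasurableSpace X] (W : Measure X) (f : ℤ → X → ℂ)

/-- `ℓ²` decoupling of the windows of length `m`, with constant `A` for the sixth powers. -/
def LinearBound (m : ℕ) (A : ℝ) : Prop :=
  ∀ p, ∫ x, ‖∑ j ∈ window p m, f j x‖ ^ 6 ∂W ≤ A * energy W f (window p m) ^ 3

/-- The bilinear decoupling inequality between separated windows in a window of length `q ^ K`:
the factor with exponent 4 lives on a window shorter by `q ^ b`, and the one with exponent 2 on a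
window shorter by at most `q ^ (2 * b)`. -/
def BilinearBound (q K : ℕ) (D : ℝ) (b : ℕ) : Prop :=
  ∀ k < K, K ≤ k + 2 * b → ∀ p p',
    Separated (q ^ (K - 1) : ℕ) (q ^ K : ℕ) (window p (q ^ k)) (window p' (q ^ (K - b))) →
    ∫ x, ‖∑ j ∈ window p (q ^ k), f j x‖ ^ 2 *
        ‖∑ j ∈ window p' (q ^ (K - b)), f j x‖ ^ 4 ∂W ≤
      D * (energy W f (window p (q ^ k)) * energy W f (window p' (q ^ (K - b))) ^ 2)

variable {W f} {q K L : ℕ}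

lemma memLp_sum_six (hf : ∀ j, MemLp (f j) 6 W) (I : Finset ℤ) :
    MemLp (fun x => ∑ j ∈ I, f j x) 6 W :=
  memLp_finsetSum I fun j _ => hf j

lemma LinearBound.mono {m : ℕ} {A A' : ℝ} (h : LinearBound W f m A) (hA : A ≤ A') :
    LinearBound W f m A' := fun p =>
  (h p).trans (mul_le_mul_of_nonneg_right hA (pow_nonneg (energy_nonneg _) 3))

lemma bilinearBound_of_linearBound (hf : ∀ j, MemLp (f j) 6 W) {A : ℝ} (hA : 0 ≤ A)
    (hlin : ∀ k < K, LinearBound W f (q ^ k) A) {b : ℕ} (hb : 1 ≤ b) :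
    BilinearBound W f q K A b := by
  intro k hk _ p p' _
  have hcube : ∀ t : ℝ, (A ^ (1 / 3 : ℝ) * t) ^ 3 = A * t ^ 3 := fun t => by
    rw [mul_pow, ← Real.rpow_natCast, ← Real.rpow_mul hA]
    norm_num
  refine (integral_norm_sq_mul_norm_pow_four_le (memLp_sum_six hf _) (memLp_sum_six hf _)
    (mul_nonneg (by positivity) (energy_nonneg (W := W) (f := f) (window p (q ^ k))))
    ((hlin k hk p).trans_eq (hcube _).symm)
    ((hlin (K - b) (by omega) p').trans_eq (hcube _).symm)).trans_eq ?_
  linear_combination (energy W f (window p (q ^ k)) *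
    energy W f (window p' (q ^ (K - b))) ^ 2) * hcube 1

lemma BilinearBound.half (hf : ∀ j, MemLp (f j) 6 W)
    (hO : ParabolicallyOrthogonalOn W L f Set.univ) (hq : 0 < q) {b : ℕ} (hb : 1 ≤ b)
    (hbK : 2 * b ≤ K) {A D D₀ : ℝ} (hD₀ : 0 ≤ D₀) (hD : D * A ≤ D₀ ^ 2)
    (hlin : LinearBound W f (q ^ (K - b)) A) (hbil : BilinearBound W f q K D (2 * b)) :
    BilinearBound W f q K (overlap L q * D₀) b := by
  intro k hk hKk p p' hsep
  have hpow : q ^ k = q ^ (k - (K - 2 * b)) * q ^ (K - 2 * b) := by rw [← pow_add]; congr 1; omega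
  have hqK : q ^ K = q * q ^ (K - 1) := by rw [← pow_succ']; congr 1; omega
  set m := q ^ (k - (K - 2 * b))
  set H := q ^ (K - b)
  set H' := q ^ (K - 2 * b) with hH'
  rw [hpow] at hsep ⊢
  have hHH' : H' * (q * q ^ (K - 1)) = H ^ 2 := by
    rw [← hqK, ← pow_add, ← pow_mul]
    congr 1
    omega
  have hHK : H ≤ q * q ^ (K - 1) := hqK ▸ Nat.pow_le_pow_right hq (by omega)
  have hsep' := hsep
  rw [hqK, Nat.cast_mul] at hsep'
  refine (integral_norm_sq_window_mul_norm_pow_four_le hf hO hq (by positivity) (by positivity)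
    hHH' hHK hsep').trans ?_
  rw [energy_window_mul, Finset.sum_mul, mul_assoc (overlap L q : ℝ), Finset.mul_sum (a := D₀)]
  refine mul_le_mul_of_nonneg_left (Finset.sum_le_sum fun a ha => ?_) (by positivity)
  have hchild := hbil (K - b) (by omega) (by omega) p' (p + a * H')
    (hsep.mono_left (window_subset_window_mul (Finset.mem_range.1 ha))).symm
  have hE := energy_nonneg (W := W) (f := f) (window (p + a * H') H')
  refine le_of_sq_le_sq ?_ (by positivity)
  calc _ ≤ _ := sq_integral_norm_sq_mul_norm_pow_four_le (memLp_sum_six hf _) (memLp_sum_six hf _)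
    _ ≤ D * (energy W f (window p' H) * energy W f (window (p + a * H') H') ^ 2) *
          (A * energy W f (window p' H) ^ 3) :=
        mul_le_mul hchild (hlin p') (integral_nonneg fun _ => by positivity)
          ((integral_nonneg fun _ => by positivity).trans hchild)
    _ = D * A * (energy W f (window (p + a * H') H') * energy W f (window p' H) ^ 2) ^ 2 := by ring
    _ ≤ D₀ ^ 2 * (energy W f (window (p + a * H') H') * energy W f (window p' H) ^ 2) ^ 2 := by
        gcongr
    _ = _ := by ring

lemma one_le_overlap (L q : ℕ) : (1 : ℝ) ≤ overlap L q := by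
  unfold overlap
  exact_mod_cast Nat.le_add_left 1 _

lemma bilinearBound_of_two_pow_mul_le (hf : ∀ j, MemLp (f j) 6 W)
    (hO : ParabolicallyOrthogonalOn W L f Set.univ) (hq : 0 < q) {B z : ℝ} (hB : 0 ≤ B)
    (hz : 1 ≤ z) (hlin : ∀ k < K, LinearBound W f (q ^ k) (B * z ^ (2 * k))) (t : ℕ) :
    ∀ b, 1 ≤ b → 2 ^ t * b ≤ K →
      BilinearBound W f q K (overlap L q ^ 2 * (B * z ^ (2 * K) / z ^ (b * t))) b := by
  have hR := one_le_overlap L q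
  induction t with
  | zero =>
    intro b hb _
    refine bilinearBound_of_linearBound hf (by positivity) (fun k hk => (hlin k hk).mono ?_) hb
    calc B * z ^ (2 * k) ≤ 1 ^ 2 * (B * z ^ (2 * K)) := by rw [one_pow, one_mul]; gcongr
      _ ≤ overlap L q ^ 2 * (B * z ^ (2 * K) / z ^ (b * 0)) := by
        rw [mul_zero, pow_zero, div_one]
        gcongr
  | succ t ih =>
    intro b hb hbK
    have h2t : 2 ^ t * (2 * b) ≤ K := by rwa [← mul_assoc, ← pow_succ]
    have h2b : 2 * b ≤ K := le_trans (Nat.le_mul_of_pos_left _ (by positivity)) h2t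
    have hzK : z ^ (2 * (K - b)) = z ^ (2 * K) / z ^ (2 * b) := by
      rw [eq_div_iff (by positivity), ← pow_add]
      congr 1
      omega
    rw [pow_two, mul_assoc]
    refine (ih (2 * b) (by omega) h2t).half hf hO hq hb h2b (by positivity)
      (le_of_eq ?_) (hlin (K - b) (by omega))
    rw [hzK, show 2 * b * t = b * t + b * t by ring, show 2 * b = b + b by ring,
      show b * (t + 1) = b * t + b by ring, pow_add, pow_add, pow_add]
    field_simp

end Bounds

/-! ## The broad–narrow reduction -/

section BroadNarrow

/-- The pairs of non-adjacent indices below `q`. -/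
def farPairs (q : ℕ) : Finset (ℕ × ℕ) :=
  (Finset.range q ×ˢ Finset.range q).filter fun kl => kl.1 + 2 ≤ kl.2 ∨ kl.2 + 2 ≤ kl.1

lemma mem_farPairs {q k l : ℕ} :
    (k, l) ∈ farPairs q ↔ (k < q ∧ l < q) ∧ (k + 2 ≤ l ∨ l + 2 ≤ k) := by
  simp only [farPairs, Finset.mem_filter, Finset.mem_product, Finset.mem_range]

lemma card_farPairs_le (q : ℕ) : (farPairs q).card ≤ q ^ 2 := by
  refine (Finset.card_filter_le _ _).trans_eq ?_
  rw [Finset.card_product, Finset.card_range, pow_two]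

variable {E : Type*} [SeminormedAddCommGroup E]

lemma norm_sum_le_four_mul_of_narrow {q k : ℕ} (hk : k < q) {u : ℕ → E}
    (hmax : ∀ l < q, ‖u l‖ ≤ ‖u k‖) (hfar : ∀ l, (k, l) ∈ farPairs q → q * ‖u l‖ ≤ ‖u k‖) :
    ‖∑ l ∈ Finset.range q, u l‖ ≤ 4 * ‖u k‖ := by
  have hq : (0 : ℝ) < q := by exact_mod_cast Nat.zero_lt_of_lt hk
  have hterm : ∀ l ∈ Finset.range q, ‖u l‖ ≤
      (if l ∈ Finset.Icc (k - 1) (k + 1) then ‖u k‖ else 0) + ‖u k‖ / q := by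
    intro l hl
    rw [Finset.mem_range] at hl
    split_ifs with hnear
    · exact (hmax l hl).trans (le_add_of_nonneg_right (by positivity))
    · rw [Finset.mem_Icc] at hnear
      rw [zero_add, le_div_iff₀' hq]
      exact hfar l (mem_farPairs.2 ⟨⟨hk, hl⟩, by omega⟩)
  have hcard : ((Finset.range q).filter (· ∈ Finset.Icc (k - 1) (k + 1))).card ≤ 3 := by
    refine (Finset.card_le_card (t := Finset.Icc (k - 1) (k + 1))
      fun l hl => (Finset.mem_filter.1 hl).2).trans ?_
    rw [Nat.card_Icc]
    omega
  calc ‖∑ l ∈ Finset.range q, u l‖ ≤ ∑ l ∈ Finset.range q, ‖u l‖ := norm_sum_le _ _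
    _ ≤ _ := Finset.sum_le_sum hterm
    _ = ((Finset.range q).filter (· ∈ Finset.Icc (k - 1) (k + 1))).card * ‖u k‖ + ‖u k‖ := by
        rw [Finset.sum_add_distrib, Finset.sum_const, Finset.card_range, nsmul_eq_mul,
          mul_div_cancel₀ _ hq.ne', ← Finset.sum_filter, Finset.sum_const, nsmul_eq_mul]
    _ ≤ 3 * ‖u k‖ + ‖u k‖ := by gcongr; exact_mod_cast hcard
    _ = 4 * ‖u k‖ := by ring

lemma norm_sum_pow_six_le_of_broad {q k l : ℕ} {u : ℕ → E} (hmax : ∀ l < q, ‖u l‖ ≤ ‖u k‖)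
    (hkl : ‖u k‖ ≤ q * ‖u l‖) :
    ‖∑ l ∈ Finset.range q, u l‖ ^ 6 ≤ q ^ 9 * (‖u k‖ ^ 3 * ‖u l‖ ^ 3) := by
  have hsum : ‖∑ l ∈ Finset.range q, u l‖ ≤ q * ‖u k‖ := by
    refine (norm_sum_le_of_le _ fun l hl => hmax l (Finset.mem_range.1 hl)).trans_eq ?_
    rw [Finset.sum_const, Finset.card_range, nsmul_eq_mul]
  calc ‖∑ l ∈ Finset.range q, u l‖ ^ 6 ≤ (q * ‖u k‖) ^ 6 := by gcongr
    _ = q ^ 6 * ‖u k‖ ^ 3 * ‖u k‖ ^ 3 := by ring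
    _ ≤ q ^ 6 * ‖u k‖ ^ 3 * (q * ‖u l‖) ^ 3 := by gcongr
    _ = q ^ 9 * (‖u k‖ ^ 3 * ‖u l‖ ^ 3) := by ring

lemma norm_sum_pow_six_le {q : ℕ} (hq : 0 < q) (u : ℕ → E) :
    ‖∑ k ∈ Finset.range q, u k‖ ^ 6 ≤ 4 ^ 6 * ∑ k ∈ Finset.range q, ‖u k‖ ^ 6 +
      q ^ 9 * ∑ kl ∈ farPairs q, ‖u kl.1‖ ^ 3 * ‖u kl.2‖ ^ 3 := by
  obtain ⟨k, hk, hmax⟩ := Finset.exists_max_image (Finset.range q) (fun k => ‖u k‖)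
    ⟨0, Finset.mem_range.2 hq⟩
  simp only [Finset.mem_range] at hk hmax
  by_cases hbroad : ∃ l, (k, l) ∈ farPairs q ∧ ‖u k‖ ≤ q * ‖u l‖
  · obtain ⟨l, hl, hkl⟩ := hbroad
    calc ‖∑ k ∈ Finset.range q, u k‖ ^ 6 ≤ q ^ 9 * (‖u k‖ ^ 3 * ‖u l‖ ^ 3) :=
          norm_sum_pow_six_le_of_broad hmax hkl
      _ ≤ q ^ 9 * ∑ kl ∈ farPairs q, ‖u kl.1‖ ^ 3 * ‖u kl.2‖ ^ 3 := by
          gcongr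
          exact Finset.single_le_sum (f := fun kl : ℕ × ℕ => ‖u kl.1‖ ^ 3 * ‖u kl.2‖ ^ 3)
            (fun _ _ => by positivity) hl
      _ ≤ _ := le_add_of_nonneg_left (by positivity)
  · push Not at hbroad
    calc ‖∑ k ∈ Finset.range q, u k‖ ^ 6 ≤ (4 * ‖u k‖) ^ 6 := by
          gcongr
          exact norm_sum_le_four_mul_of_narrow hk hmax fun l hl => (hbroad l hl).le
      _ = 4 ^ 6 * ‖u k‖ ^ 6 := by ring
      _ ≤ 4 ^ 6 * ∑ k ∈ Finset.range q, ‖u k‖ ^ 6 := by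
          gcongr
          exact Finset.single_le_sum (f := fun k => ‖u k‖ ^ 6) (fun _ _ => by positivity)
            (Finset.mem_range.2 hk)
      _ ≤ _ := le_add_of_nonneg_right (by positivity)

variable {X : Type*} [MeasurableSpace X] {W : Measure X}

lemma integral_norm_sum_pow_six_le {q : ℕ} (hq : 0 < q) {F : ℕ → X → ℂ}
    (hF : ∀ k, MemLp (F k) 6 W) :
    ∫ x, ‖∑ k ∈ Finset.range q, F k x‖ ^ 6 ∂W ≤
      4 ^ 6 * ∑ k ∈ Finset.range q, ∫ x, ‖F k x‖ ^ 6 ∂W +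
        q ^ 9 * ∑ kl ∈ farPairs q, ∫ x, ‖F kl.1 x‖ ^ 3 * ‖F kl.2 x‖ ^ 3 ∂W := by
  have hnarrow : ∀ k ∈ Finset.range q, Integrable (fun x => ‖F k x‖ ^ 6) W :=
    fun k _ => integrable_norm_pow_six (hF k)
  have hbroad : ∀ kl ∈ farPairs q, Integrable (fun x => ‖F kl.1 x‖ ^ 3 * ‖F kl.2 x‖ ^ 3) W :=
    fun kl _ => integrable_norm_pow_mul_norm_pow (hF kl.1) (hF kl.2) rfl
  have hn := (integrable_finsetSum _ hnarrow).const_mul (4 ^ 6)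
  have hb := (integrable_finsetSum _ hbroad).const_mul ((q : ℝ) ^ 9)
  refine (integral_mono (integrable_norm_pow_six (memLp_finsetSum _ fun k _ => hF k)) (hn.add hb)
    fun x => norm_sum_pow_six_le hq fun k => F k x).trans_eq ?_
  rw [integral_add' hn hb, integral_const_mul, integral_const_mul, integral_finsetSum _ hnarrow,
    integral_finsetSum _ hbroad]

lemma integral_norm_cube_mul_norm_cube_le {f h : X → ℂ} (hf : MemLp f 6 W) (hh : MemLp h 6 W) :
    ∫ x, ‖f x‖ ^ 3 * ‖h x‖ ^ 3 ∂W ≤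
      (∫ x, ‖f x‖ ^ 2 * ‖h x‖ ^ 4 ∂W + ∫ x, ‖h x‖ ^ 2 * ‖f x‖ ^ 4 ∂W) / 2 := by
  have h24 := integrable_norm_pow_mul_norm_pow hf hh (a := 2) (b := 4) rfl
  have h42 := integrable_norm_pow_mul_norm_pow hh hf (a := 2) (b := 4) rfl
  rw [← integral_add h24 h42, ← integral_div]
  refine integral_mono (integrable_norm_pow_mul_norm_pow hf hh rfl) ((h24.add h42).div_const 2)
    fun x => ?_
  have : 0 ≤ ‖f x‖ ^ 2 * ‖h x‖ ^ 2 * (‖f x‖ - ‖h x‖) ^ 2 := by positivity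
  change ‖f x‖ ^ 3 * ‖h x‖ ^ 3 ≤ (‖f x‖ ^ 2 * ‖h x‖ ^ 4 + ‖h x‖ ^ 2 * ‖f x‖ ^ 4) / 2
  linarith

end BroadNarrow

/-! ## Decoupling for parabolically orthogonal families -/

section ParabolicDecoupling

variable {X : Type*} [MeasurableSpace X] {W : Measure X} {f : ℤ → X → ℂ} {q K L : ℕ}

lemma sum_pow_three_le {ι : Type*} (s : Finset ι) {e : ι → ℝ} (he : ∀ i ∈ s, 0 ≤ e i) :
    ∑ i ∈ s, e i ^ 3 ≤ (∑ i ∈ s, e i) ^ 3 := by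
  calc ∑ i ∈ s, e i ^ 3 ≤ ∑ i ∈ s, e i * (∑ i ∈ s, e i) ^ 2 := by
        refine Finset.sum_le_sum fun i hi => ?_
        rw [pow_succ' (e i)]
        have := he i hi
        gcongr
        exact Finset.single_le_sum he hi
    _ = (∑ i ∈ s, e i) ^ 3 := by rw [← Finset.sum_mul, ← pow_succ']

lemma linearBound_trivial (hf : ∀ j, MemLp (f j) 6 W) (m : ℕ) : LinearBound W f m (m ^ 5) := by
  intro p
  have hcard : (window p m).card = m := by simp [window]
  have hpt : ∀ x, ‖∑ j ∈ window p m, f j x‖ ^ 6 ≤ m ^ 5 * ∑ j ∈ window p m, ‖f j x‖ ^ 6 := by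
    intro x
    calc _ ≤ (∑ j ∈ window p m, ‖f j x‖) ^ 6 := by gcongr; exact norm_sum_le _ _
      _ ≤ _ := by
        simpa only [hcard] using
          pow_sum_le_card_mul_sum_pow (s := window p m) (fun j _ => norm_nonneg (f j x)) 5
  have hint : ∀ j ∈ window p m, Integrable (fun x => ‖f j x‖ ^ 6) W :=
    fun j _ => integrable_norm_pow_six (hf j)
  have hnn : ∀ j, 0 ≤ ∫ x, ‖f j x‖ ^ 6 ∂W := fun j => integral_nonneg fun _ => by positivity
  calc _ ≤ ∫ x, m ^ 5 * ∑ j ∈ window p m, ‖f j x‖ ^ 6 ∂W :=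
        integral_mono (integrable_norm_pow_six (memLp_sum_six hf _))
          ((integrable_finsetSum _ hint).const_mul _) hpt
    _ = m ^ 5 * ∑ j ∈ window p m, ((∫ x, ‖f j x‖ ^ 6 ∂W) ^ (1 / 3 : ℝ)) ^ 3 := by
        rw [integral_const_mul, integral_finsetSum _ hint]
        congr 2 with j
        rw [← Real.rpow_natCast, ← Real.rpow_mul (hnn j)]
        norm_num
    _ ≤ m ^ 5 * energy W f (window p m) ^ 3 := by
        gcongr
        exact sum_pow_three_le _ fun j _ => Real.rpow_nonneg (hnn j) _

lemma integral_norm_cube_mul_norm_cube_child_le (hf : ∀ j, MemLp (f j) 6 W) (hK : 1 ≤ K) {V : ℝ}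
    (hV : 0 ≤ V) (hbil : BilinearBound W f q K V 1) (p : ℤ) {k l : ℕ}
    (hkl : (k, l) ∈ farPairs q) :
    ∫ x, ‖∑ j ∈ window (p + k * (q ^ (K - 1) : ℕ)) (q ^ (K - 1)), f j x‖ ^ 3 *
        ‖∑ j ∈ window (p + l * (q ^ (K - 1) : ℕ)) (q ^ (K - 1)), f j x‖ ^ 3 ∂W ≤
      V * energy W f (window p (q ^ K)) ^ 3 := by
  have hqK : q ^ K = q * q ^ (K - 1) := by rw [← pow_succ']; congr 1; omega
  have hchild : ∀ i < q, energy W f (window (p + i * (q ^ (K - 1) : ℕ)) (q ^ (K - 1))) ≤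
      energy W f (window p (q ^ K)) := fun i hi => by
    rw [hqK]
    exact Finset.sum_le_sum_of_subset_of_nonneg (window_subset_window_mul hi)
      fun j _ _ => Real.rpow_nonneg (integral_nonneg fun _ => by positivity) _
  have hone : ∀ k l, (k, l) ∈ farPairs q →
      ∫ x, ‖∑ j ∈ window (p + k * (q ^ (K - 1) : ℕ)) (q ^ (K - 1)), f j x‖ ^ 2 *
        ‖∑ j ∈ window (p + l * (q ^ (K - 1) : ℕ)) (q ^ (K - 1)), f j x‖ ^ 4 ∂W ≤
      V * energy W f (window p (q ^ K)) ^ 3 := by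
    intro k l hkl
    obtain ⟨⟨hk, hl⟩, hfar⟩ := mem_farPairs.1 hkl
    refine (hbil (K - 1) (by omega) (by omega) _ _ ?_).trans ?_
    · rw [hqK, Nat.cast_mul]
      exact hfar.elim (fun h => (separated_window_of_add_two_le hl h).symm)
        fun h => separated_window_of_add_two_le hk h
    · rw [pow_succ' _ 2]
      have := energy_nonneg (W := W) (f := f) (window p (q ^ K))
      have hl0 := energy_nonneg (W := W) (f := f)
        (window (p + l * (q ^ (K - 1) : ℕ)) (q ^ (K - 1)))
      gcongr
      · exact hchild k hk
      · exact hchild l hl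
  have hlk : (l, k) ∈ farPairs q := by
    rw [mem_farPairs] at hkl ⊢
    tauto
  refine (integral_norm_cube_mul_norm_cube_le (memLp_sum_six hf _) (memLp_sum_six hf _)).trans ?_
  linarith [hone k l hkl, hone l k hlk]

lemma linearBound_of_bilinearBound (hf : ∀ j, MemLp (f j) 6 W) (hq : 0 < q) (hK : 1 ≤ K) {A V : ℝ}
    (hA : 0 ≤ A) (hV : 0 ≤ V) (hlin : LinearBound W f (q ^ (K - 1)) A)
    (hbil : BilinearBound W f q K V 1) :
    LinearBound W f (q ^ K) (4 ^ 6 * A + q ^ 11 * V) := by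
  intro p
  have hqK : q ^ K = q * q ^ (K - 1) := by rw [← pow_succ']; congr 1; omega
  set S := energy W f (window p (q ^ K)) with hS
  have hS0 : 0 ≤ S := energy_nonneg _
  set F : ℕ → X → ℂ := fun k x => ∑ j ∈ window (p + k * (q ^ (K - 1) : ℕ)) (q ^ (K - 1)), f j x
  have hnarrow : ∑ k ∈ Finset.range q, ∫ x, ‖F k x‖ ^ 6 ∂W ≤ A * S ^ 3 :=
    calc _ ≤ ∑ k ∈ Finset.range q,
          A * energy W f (window (p + k * (q ^ (K - 1) : ℕ)) (q ^ (K - 1))) ^ 3 :=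
          Finset.sum_le_sum fun k _ => hlin _
      _ ≤ A * S ^ 3 := by
        rw [← Finset.mul_sum, hS, hqK, energy_window_mul]
        gcongr
        exact sum_pow_three_le _ fun k _ => energy_nonneg _
  have hbroad : ∑ kl ∈ farPairs q, ∫ x, ‖F kl.1 x‖ ^ 3 * ‖F kl.2 x‖ ^ 3 ∂W ≤
      q ^ 2 * (V * S ^ 3) :=
    calc _ ≤ ∑ _kl ∈ farPairs q, V * S ^ 3 := Finset.sum_le_sum fun kl hkl =>
          integral_norm_cube_mul_norm_cube_child_le hf hK hV hbil p hkl
      _ ≤ q ^ 2 * (V * S ^ 3) := by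
        rw [Finset.sum_const, nsmul_eq_mul]
        gcongr
        exact_mod_cast card_farPairs_le q
  calc ∫ x, ‖∑ j ∈ window p (q ^ K), f j x‖ ^ 6 ∂W
      = ∫ x, ‖∑ k ∈ Finset.range q, F k x‖ ^ 6 ∂W := by simp only [hqK, sum_window_mul, F]
    _ ≤ 4 ^ 6 * ∑ k ∈ Finset.range q, ∫ x, ‖F k x‖ ^ 6 ∂W +
        q ^ 9 * ∑ kl ∈ farPairs q, ∫ x, ‖F kl.1 x‖ ^ 3 * ‖F kl.2 x‖ ^ 3 ∂W :=
        integral_norm_sum_pow_six_le hq fun k => memLp_sum_six hf _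
    _ ≤ 4 ^ 6 * (A * S ^ 3) + q ^ 9 * (q ^ 2 * (V * S ^ 3)) := by gcongr
    _ = (4 ^ 6 * A + q ^ 11 * V) * S ^ 3 := by ring

lemma linearBound_pow (hf : ∀ j, MemLp (f j) 6 W)
    (hO : ParabolicallyOrthogonalOn W L f Set.univ) (hq : 0 < q) {z : ℝ} (hz : 1 ≤ z)
    (hz2 : 2 * 4 ^ 6 ≤ z ^ 2) {s : ℕ} (hzs : 2 * (q ^ 11 * (overlap L q : ℝ) ^ 2) ≤ z ^ s) (K : ℕ) :
    LinearBound W f (q ^ K) ((q ^ 2 ^ s) ^ 5 * z ^ (2 * K)) := by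
  induction K using Nat.strong_induction_on with
  | _ K ih =>
    by_cases hK : 2 ^ s ≤ K
    · have hK1 : 1 ≤ K := Nat.one_le_two_pow.trans hK
      set B : ℝ := (q ^ 2 ^ s) ^ 5
      have hbil := bilinearBound_of_two_pow_mul_le hf hO hq (by positivity : 0 ≤ B) hz ih s 1 le_rfl
        (by rwa [mul_one])
      rw [one_mul] at hbil
      refine (linearBound_of_bilinearBound hf hq hK1 (by positivity) (by positivity)
        (ih (K - 1) (by omega)) hbil).mono ?_
      have hzK : z ^ (2 * K) = z ^ (2 * (K - 1)) * z ^ 2 := by rw [← pow_add]; congr 1; omega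
      have hnarrow : 4 ^ 6 * (B * z ^ (2 * (K - 1))) ≤ B * z ^ (2 * K) / 2 := by
        rw [hzK]
        have : 0 ≤ B * z ^ (2 * (K - 1)) := by positivity
        linarith [mul_le_mul_of_nonneg_left hz2 this]
      have hbroad : q ^ 11 * ((overlap L q : ℝ) ^ 2 * (B * z ^ (2 * K) / z ^ s)) ≤
          B * z ^ (2 * K) / 2 := by
        have hBz : 0 ≤ B * z ^ (2 * K) / z ^ s := by positivity
        have := mul_le_mul_of_nonneg_right hzs hBz
        rw [mul_div_cancel₀ _ (by positivity)] at this
        linarith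
      linarith
    · refine (linearBound_trivial hf _).mono ?_
      push_cast
      calc ((q : ℝ) ^ K) ^ 5 ≤ (q ^ 2 ^ s) ^ 5 * 1 := by
            rw [mul_one]
            gcongr
            · exact_mod_cast hq
            · omega
        _ ≤ (q ^ 2 ^ s) ^ 5 * z ^ (2 * K) := by
            gcongr
            exact one_le_pow₀ hz

lemma ParabolicallyOrthogonalOn.indicator {I : Set ℤ} [DecidablePred (· ∈ I)]
    (hO : ParabolicallyOrthogonalOn W L f I) :
    ParabolicallyOrthogonalOn W L (fun j => if j ∈ I then f j else 0) Set.univ := by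
  intro a _ b _ c _ a' _ b' _ c' _ hgap
  by_cases h : a ∈ I ∧ b ∈ I ∧ c ∈ I ∧ a' ∈ I ∧ b' ∈ I ∧ c' ∈ I
  · obtain ⟨ha, hb, hc, ha', hb', hc'⟩ := h
    simp only [if_pos ha, if_pos hb, if_pos hc, if_pos ha', if_pos hb', if_pos hc']
    exact hO a ha b hb c hc a' ha' b' hb' c' hc' hgap
  · refine (integral_congr_ae (Filter.Eventually.of_forall fun x => ?_)).trans (integral_zero X ℂ)
    have hzero : ∀ {j}, j ∉ I → (if j ∈ I then f j else 0) x = 0 := fun hj => by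
      rw [if_neg hj, Pi.zero_apply]
    change _ = (0 : ℂ)
    simp only [not_and_or] at h
    rcases h with h | h | h | h | h | h <;> simp [hzero h]

lemma LinearBound.of_indicator {p : ℤ} {m n : ℕ} (hmn : m ≤ n) {A : ℝ}
    (h : LinearBound W (fun j => if j ∈ window p m then f j else 0) n A) :
    ∫ x, ‖∑ j ∈ window p m, f j x‖ ^ 6 ∂W ≤ A * energy W f (window p m) ^ 3 := by
  have hsub : window p m ⊆ window p n := Finset.Ico_subset_Ico_right (by omega)
  have hsum : ∀ x, ∑ j ∈ window p n, (if j ∈ window p m then f j else 0) x =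
      ∑ j ∈ window p m, f j x := fun x => by
    rw [← Finset.sum_subset hsub fun j _ hj => by rw [if_neg hj, Pi.zero_apply]]
    exact Finset.sum_congr rfl fun j hj => by rw [if_pos hj]
  have henergy : energy W (fun j => if j ∈ window p m then f j else 0) (window p n) =
      energy W f (window p m) := by
    unfold energy
    rw [← Finset.sum_subset hsub fun j _ hj => by simp [hj]]
    exact Finset.sum_congr rfl fun j hj => by simp only [if_pos hj]
  have hp := h p
  rw [henergy] at hp
  simpa only [hsum] using hp

lemma pow_clog_le {q M : ℕ} (hq : 1 < q) (hM : 1 ≤ M) : q ^ Nat.clog q M ≤ q * M := by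
  rcases hM.eq_or_lt with rfl | hM
  · rw [Nat.clog_one_right, pow_zero, mul_one]
    exact hq.le
  · have hpos := Nat.clog_pos hq hM
    calc q ^ Nat.clog q M = q * q ^ (Nat.clog q M).pred := by
          rw [← pow_succ', ← Nat.succ_eq_add_one, Nat.succ_pred_eq_of_pos hpos]
      _ ≤ q * M := by
          gcongr
          exact (Nat.pow_pred_clog_lt_self hq hM).le

theorem exists_parabolic_decoupling (L : ℕ) {η : ℝ} (hη : 0 < η) :
    ∃ C > 0, ∀ {X : Type*} [MeasurableSpace X] {W : Measure X} {f : ℤ → X → ℂ} {p : ℤ} {M : ℕ},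
      1 ≤ M → (∀ j ∈ window p M, MemLp (f j) 6 W) →
      ParabolicallyOrthogonalOn W L f (window p M) →
      ∫ x, ‖∑ j ∈ window p M, f j x‖ ^ 6 ∂W ≤
        C * (M : ℝ) ^ η * energy W f (window p M) ^ 3 := by
  obtain ⟨q, hqz, hq⟩ := (((tendsto_rpow_atTop (half_pos hη)).comp
    tendsto_natCast_atTop_atTop).eventually_ge_atTop (2 * 4 ^ 6)).and
    (Filter.eventually_gt_atTop 1) |>.exists
  set z : ℝ := (q : ℝ) ^ (η / 2)
  change 2 * 4 ^ 6 ≤ z at hqz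
  have hz : 1 < z := by linarith
  obtain ⟨s, hs⟩ := pow_unbounded_of_one_lt (2 * ((q : ℝ) ^ 11 * (overlap L q : ℝ) ^ 2)) hz
  have hq0 : (0 : ℝ) < q := by exact_mod_cast hq.le
  refine ⟨(q ^ 2 ^ s) ^ 5 * (q : ℝ) ^ η, by positivity, fun {X _ W f p M} hM hf hO => ?_⟩
  classical
  have hlin := linearBound_pow (f := fun j => if j ∈ window p M then f j else 0)
    (fun j => by
      split_ifs with hj
      exacts [hf j hj, MemLp.zero])
    hO.indicator hq.le hz.le (by nlinarith) hs.le (Nat.clog q M)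
  refine (hlin.of_indicator (Nat.le_pow_clog hq M)).trans ?_
  refine mul_le_mul_of_nonneg_right ?_ (pow_nonneg (energy_nonneg _) 3)
  rw [mul_assoc]
  refine mul_le_mul_of_nonneg_left ?_ (by positivity)
  calc z ^ (2 * Nat.clog q M) = ((q : ℝ) ^ η) ^ Nat.clog q M := by
        rw [pow_mul, ← Real.rpow_mul_natCast hq0.le, Nat.cast_ofNat, div_mul_cancel₀ η two_ne_zero]
    _ = ((q ^ Nat.clog q M : ℕ) : ℝ) ^ η := by rw [Real.rpow_pow_comm hq0.le, Nat.cast_pow]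
    _ ≤ ((q : ℝ) * M) ^ η := by gcongr; exact_mod_cast pow_clog_le hq hM
    _ = (q : ℝ) ^ η * (M : ℝ) ^ η := Real.mul_rpow hq0.le (by positivity)

end ParabolicDecoupling

/-! ## Spectra of functions on the plane -/

section Spectrum

open scoped FourierTransform Pointwise

/-- The character of `ℝ²` with frequency `ξ`, evaluated at `s`. -/
def planeWave (ξ s : ℝ × ℝ) : ℂ := 𝐞 (s.1 * ξ.1 + s.2 * ξ.2)

lemma planeWave_add (ξ ζ s : ℝ × ℝ) : planeWave (ξ + ζ) s = planeWave ξ s * planeWave ζ s := by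
  simp only [planeWave, Prod.fst_add, Prod.snd_add, mul_add,
    AddChar.map_add_eq_mul, Circle.coe_mul]
  ring

lemma planeWave_neg (ξ s : ℝ × ℝ) : planeWave (-ξ) s = starRingEnd ℂ (planeWave ξ s) := by
  rw [planeWave, planeWave, Circle.starRingEnd_addChar]
  congr 2
  simp only [Prod.fst_neg, Prod.snd_neg]
  ring

lemma norm_planeWave (ξ s : ℝ × ℝ) : ‖planeWave ξ s‖ = 1 := Circle.norm_coe _

lemma continuous_planeWave : Continuous fun z : (ℝ × ℝ) × ℝ × ℝ => planeWave z.1 z.2 := by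
  unfold planeWave
  fun_prop

/-- `F` is a superposition of characters of `ℝ²` with frequencies in `T`. -/
def HasSpectrumIn (F : ℝ × ℝ → ℂ) (T : Set (ℝ × ℝ)) : Prop :=
  ∃ (Ω : Type) (_ : MeasurableSpace Ω) (m : Measure Ω) (_ : SFinite m) (h : Ω → ℂ)
    (Φ : Ω → ℝ × ℝ), Integrable h m ∧ Measurable Φ ∧ (∀ᵐ ω ∂m, Φ ω ∈ T) ∧
      ∀ s, F s = ∫ ω, h ω * planeWave (Φ ω) s ∂m

variable {F G : ℝ × ℝ → ℂ} {T T' : Set (ℝ × ℝ)}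

lemma HasSpectrumIn.mul (hF : HasSpectrumIn F T) (hG : HasSpectrumIn G T') :
    HasSpectrumIn (fun s => F s * G s) (T + T') := by
  obtain ⟨Ω, _, m, _, h, Φ, hh, hΦ, hT, hF⟩ := hF
  obtain ⟨Ω', _, m', _, h', Φ', hh', hΦ', hT', hG⟩ := hG
  refine ⟨Ω × Ω', inferInstance, m.prod m', inferInstance, fun ω => h ω.1 * h' ω.2,
    fun ω => Φ ω.1 + Φ' ω.2, hh.mul_prod hh', by fun_prop, ?_, fun s => ?_⟩
  · filter_upwards [Measure.quasiMeasurePreserving_fst.ae hT,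
      Measure.quasiMeasurePreserving_snd.ae hT'] with ω hω hω'
    exact Set.add_mem_add hω hω'
  · simp only [hF, hG, ← integral_prod_mul, planeWave_add, mul_mul_mul_comm]

lemma HasSpectrumIn.conj (hF : HasSpectrumIn F T) :
    HasSpectrumIn (fun s => starRingEnd ℂ (F s)) (-T) := by
  obtain ⟨Ω, _, m, _, h, Φ, hh, hΦ, hT, hF⟩ := hF
  refine ⟨Ω, inferInstance, m, inferInstance, fun ω => starRingEnd ℂ (h ω), fun ω => -Φ ω,
    (LinearIsometryEquiv.integrable_comp_iff Complex.conjLIE).2 hh, hΦ.neg,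
    hT.mono fun ω hω => Set.neg_mem_neg.2 hω, fun s => ?_⟩
  simp only [hF, ← integral_conj, map_mul, planeWave_neg]

section

variable {Ω : Type*} [MeasurableSpace Ω] {m : Measure Ω} {h : Ω → ℂ} {Φ : Ω → ℝ × ℝ}

lemma aestronglyMeasurable_mul_planeWave (hh : AEStronglyMeasurable h m) (hΦ : Measurable Φ)
    (μ : Measure (ℝ × ℝ)) :
    AEStronglyMeasurable (fun z : (ℝ × ℝ) × Ω => h z.2 * planeWave (Φ z.2) z.1) (μ.prod m) :=
  hh.comp_snd.mul (continuous_planeWave.measurable.comp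
    ((hΦ.comp measurable_snd).prodMk measurable_fst)).aestronglyMeasurable

lemma integrable_mul_planeWave [SFinite m] (hh : Integrable h m) (hΦ : Measurable Φ)
    (μ : Measure (ℝ × ℝ)) [IsFiniteMeasure μ] :
    Integrable (fun z : (ℝ × ℝ) × Ω => h z.2 * planeWave (Φ z.2) z.1) (μ.prod m) :=
  (hh.comp_snd μ).mono (aestronglyMeasurable_mul_planeWave hh.1 hΦ μ)
    (.of_forall fun z => by rw [norm_mul, norm_planeWave, mul_one])

end

lemma HasSpectrumIn.memLp (hF : HasSpectrumIn F T) (μ : Measure (ℝ × ℝ)) [IsFiniteMeasure μ]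
    (p : ℝ≥0∞) : MemLp F p μ := by
  obtain ⟨Ω, _, m, _, h, Φ, hh, hΦ, -, hF⟩ := hF
  obtain rfl : F = fun s => ∫ ω, h ω * planeWave (Φ ω) s ∂m := funext hF
  refine .of_bound (aestronglyMeasurable_mul_planeWave hh.1 hΦ μ).integral_prod_right'
    (∫ ω, ‖h ω‖ ∂m) (.of_forall fun s => (norm_integral_le_integral_norm _).trans_eq ?_)
  simp only [norm_mul, norm_planeWave, mul_one]

lemma HasSpectrumIn.integral_eq_zero (hF : HasSpectrumIn F T) {κ : Measure ℝ} [IsFiniteMeasure κ]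
    (hκ : ∀ u : ℝ, 1 < |u| → ∫ s, (𝐞 (s * u) : ℂ) ∂κ = 0)
    (hT : ∀ ξ ∈ T, 1 < |ξ.1| ∨ 1 < |ξ.2|) : ∫ s, F s ∂(κ.prod κ) = 0 := by
  obtain ⟨Ω, _, m, _, h, Φ, hh, hΦ, hΦT, hF⟩ := hF
  simp_rw [hF]
  rw [integral_integral_swap (integrable_mul_planeWave hh hΦ _)]
  refine integral_eq_zero_of_ae (hΦT.mono fun ω hω => ?_)
  have hprod : ∫ s, planeWave (Φ ω) s ∂(κ.prod κ) =
      (∫ s, (𝐞 (s * (Φ ω).1) : ℂ) ∂κ) * ∫ s, (𝐞 (s * (Φ ω).2) : ℂ) ∂κ := by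
    rw [← integral_prod_mul]
    simp only [planeWave, AddChar.map_add_eq_mul, Circle.coe_mul]
  change ∫ s, h ω * planeWave (Φ ω) s ∂(κ.prod κ) = 0
  rw [integral_const_mul, hprod]
  rcases hT _ hω with hu | hu <;> simp [hκ _ hu]

end Spectrum

/-! ## A rapidly decaying measure with compactly supported Fourier transform -/

section Kernel

open scoped FourierTransform SchwartzMap

/-- The measure with density `|G|²`. -/
def sqNormMeasure (G : 𝓢(ℝ, ℂ)) : Measure ℝ :=
  volume.withDensity fun s => ENNReal.ofReal (‖G s‖ ^ 2)

lemma measurable_ofReal_norm_sq (G : 𝓢(ℝ, ℂ)) :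
    Measurable fun s => ENNReal.ofReal (‖G s‖ ^ 2) := by
  have := G.continuous.measurable
  fun_prop

lemma lintegral_one_add_mul_abs_pow_sqNormMeasure_lt_top (G : 𝓢(ℝ, ℂ)) {R : ℝ} (hR : 0 ≤ R)
    (k : ℕ) : ∫⁻ s, ENNReal.ofReal ((1 + R * |s|) ^ k) ∂sqNormMeasure G < ∞ := by
  obtain ⟨B, -, hB⟩ := G.decay 0 0
  simp only [pow_zero, one_mul, norm_iteratedFDeriv_zero] at hB
  have hint : Integrable fun s : ℝ =>
      B * 2 ^ (k - 1) * (‖s‖ ^ 0 * ‖G s‖ + R ^ k * (‖s‖ ^ k * ‖G s‖)) :=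
    ((G.integrable_pow_mul volume 0).add ((G.integrable_pow_mul volume k).const_mul _)).const_mul _
  rw [sqNormMeasure, lintegral_withDensity_eq_lintegral_mul _ (measurable_ofReal_norm_sq G)
    (by fun_prop)]
  refine (lintegral_mono fun s => ?_).trans_lt hint.lintegral_lt_top
  rw [Pi.mul_apply, ← ENNReal.ofReal_mul (by positivity)]
  refine ENNReal.ofReal_le_ofReal ?_
  calc ‖G s‖ ^ 2 * (1 + R * |s|) ^ k
      ≤ (B * ‖G s‖) * (2 ^ (k - 1) * (1 ^ k + (R * |s|) ^ k)) := by
        rw [pow_two]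
        have hB0 := (norm_nonneg _).trans (hB s)
        gcongr
        · exact hB s
        · exact add_pow_le zero_le_one (by positivity) k
    _ = _ := by
        rw [Real.norm_eq_abs]
        ring

instance (G : 𝓢(ℝ, ℂ)) : IsFiniteMeasure (sqNormMeasure G) :=
  ⟨by simpa using lintegral_one_add_mul_abs_pow_sqNormMeasure_lt_top G le_rfl 0⟩

lemma sqNormMeasure_ne_zero {G : 𝓢(ℝ, ℂ)} (hG : G ≠ 0) : sqNormMeasure G ≠ 0 := by
  intro h0
  have hae : (fun s => ‖G s‖ ^ 2) =ᵐ[volume] fun _ => 0 :=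
    (withDensity_eq_zero_iff (measurable_ofReal_norm_sq G).aemeasurable |>.1 h0).mono fun s hs =>
      le_antisymm (ENNReal.ofReal_eq_zero.1 hs) (by positivity)
  have hzero := (Continuous.ae_eq_iff_eq volume (by fun_prop) continuous_const).1 hae
  exact hG (SchwartzMap.ext fun s => norm_eq_zero.1 (pow_eq_zero_iff two_ne_zero |>.1
    (congrFun hzero s)))

lemma fourier_compSubConstCLM (φ : 𝓢(ℝ, ℂ)) (u s : ℝ) :
    𝓕 (SchwartzMap.compSubConstCLM ℂ u φ) s = 𝐞 (-(s * u)) * 𝓕 φ s := by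
  have := congrFun (VectorFourier.fourierIntegral_comp_add_right 𝐞 volume (innerₗ ℝ) φ (-u)) s
  rw [innerₗ_apply_apply, inner_neg_left, RCLike.inner_apply, conj_trivial] at this
  exact this

lemma integral_fourierChar_sqNormMeasure_fourier (φ : 𝓢(ℝ, ℂ)) (u : ℝ) :
    ∫ s, (𝐞 (s * u) : ℂ) ∂sqNormMeasure (𝓕 φ) = ∫ x, inner ℂ (φ (x - u)) (φ x) := by
  have hparseval := SchwartzMap.integral_inner_fourier_fourier (SchwartzMap.compSubConstCLM ℂ u φ) φ
  simp only [SchwartzMap.compSubConstCLM_apply] at hparseval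
  rw [← hparseval, sqNormMeasure,
    integral_withDensity_eq_integral_toReal_smul (measurable_ofReal_norm_sq _) (by simp)]
  refine integral_congr_ae (.of_forall fun s => ?_)
  change (ENNReal.ofReal (‖𝓕 φ s‖ ^ 2)).toReal • (𝐞 (s * u) : ℂ) =
    inner ℂ (𝓕 (SchwartzMap.compSubConstCLM ℂ u φ) s) (𝓕 φ s)
  rw [fourier_compSubConstCLM, RCLike.inner_apply, map_mul (starRingEnd ℂ),
    Circle.starRingEnd_addChar, neg_neg, mul_left_comm, RCLike.mul_conj,
    ENNReal.toReal_ofReal (by positivity), Complex.real_smul, mul_comm]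
  norm_cast

/-- A bump function supported in an interval of length `1`. -/
def schwartzBump : 𝓢(ℝ, ℂ) :=
  let b : ContDiffBump (0 : ℝ) := ⟨1 / 4, 1 / 2, by norm_num, by norm_num⟩
  HasCompactSupport.toSchwartzMap (f := fun x => (b x : ℂ))
    (b.hasCompactSupport.comp_left Complex.ofReal_zero)
    (Complex.ofRealCLM.contDiff.comp b.contDiff)

lemma schwartzBump_eq_zero {x : ℝ} (hx : 1 / 2 ≤ |x|) : schwartzBump x = 0 :=
  Complex.ofReal_eq_zero.2 (ContDiffBump.zero_of_le_dist _ (by rwa [dist_zero_right]))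

lemma schwartzBump_ne_zero : schwartzBump ≠ 0 := fun h => by
  have hone : schwartzBump 0 = 1 := Complex.ofReal_eq_one.2
    (ContDiffBump.one_of_mem_closedBall _ (Metric.mem_closedBall_self (by norm_num)))
  rw [h] at hone
  exact zero_ne_one hone

lemma exists_measure_integral_fourierChar_eq_zero :
    ∃ κ : Measure ℝ, IsFiniteMeasure κ ∧ κ ≠ 0 ∧
      (∀ u : ℝ, 1 < |u| → ∫ s, (𝐞 (s * u) : ℂ) ∂κ = 0) ∧
      ∀ R : ℝ, 0 ≤ R → ∀ k : ℕ, ∫⁻ s, ENNReal.ofReal ((1 + R * |s|) ^ k) ∂κ < ∞ := by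
  refine ⟨sqNormMeasure (𝓕 schwartzBump), inferInstance, sqNormMeasure_ne_zero fun h => ?_,
    fun u hu => ?_, fun R => lintegral_one_add_mul_abs_pow_sqNormMeasure_lt_top _⟩
  · exact schwartzBump_ne_zero
      ((FourierTransform.fourierEquiv ℂ 𝓢(ℝ, ℂ) (F := 𝓢(ℝ, ℂ))).map_eq_zero_iff.1 h)
  · rw [integral_fourierChar_sqNormMeasure_fourier]
    refine integral_eq_zero_of_ae (.of_forall fun x => ?_)
    rcases le_or_gt (1 / 2) |x| with hx | hx
    · simp [schwartzBump_eq_zero hx]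
    · have hxu : 1 / 2 ≤ |x - u| := by linarith [abs_sub_abs_le_abs_sub u x, abs_sub_comm u x]
      simp [schwartzBump_eq_zero hxu]

end Kernel

/-! ## The extension operator in polar coordinates -/

section Polar

open scoped FourierTransform

/-- The density `g dξ` in polar coordinates `p = (r, φ)`, including the Jacobian `r`. -/
def polarAmplitude (g : ℝ × ℝ → ℂ) (p : ℝ × ℝ) : ℂ := p.1 * g (polarCoord.symm p)

/-- The phase `x · (ξ, |ξ|)` of the cone at the point `ξ` with polar coordinates `p = (r, φ)`. -/
def conePhase (x : EuclideanSpace ℝ (Fin 3)) (p : ℝ × ℝ) : ℝ :=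
  p.1 * (x 0 * cos p.2 + x 1 * sin p.2 + x 2)

lemma measurable_conePhase (x : EuclideanSpace ℝ (Fin 3)) : Measurable (conePhase x) := by
  unfold conePhase
  fun_prop

lemma sector_eq_image (I J : Set ℝ) : sector I J = polarCoord.symm '' (I ×ˢ J) := by
  ext p
  simp only [sector, Set.mem_ofPred_eq, Set.mem_image, Set.mem_prod, Prod.exists,
    polarCoord_symm_apply]
  grind

lemma sector_mono_right {I J J' : Set ℝ} (h : J ⊆ J') : sector I J ⊆ sector I J' := by
  rw [sector_eq_image, sector_eq_image]
  exact Set.image_mono (Set.prod_mono_right h)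

lemma cexp_polarCoord_symm (x : EuclideanSpace ℝ (Fin 3)) {p : ℝ × ℝ} (hp : 0 ≤ p.1) :
    Complex.exp (2 * π * Complex.I * (x 0 * (polarCoord.symm p).1 + x 1 * (polarCoord.symm p).2 +
      x 2 * √((polarCoord.symm p).1 ^ 2 + (polarCoord.symm p).2 ^ 2))) = 𝐞 (conePhase x p) := by
  have hnorm : √((p.1 * cos p.2) ^ 2 + (p.1 * sin p.2) ^ 2) = p.1 := by
    rw [mul_pow, mul_pow, ← mul_add, cos_sq_add_sin_sq, mul_one, sqrt_sq hp]
  rw [polarCoord_symm_apply, hnorm, fourierChar_apply, conePhase]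
  push_cast
  ring_nf

variable {g : ℝ × ℝ → ℂ} {I J : Set ℝ}

section

variable (hI : MeasurableSet I) (hJ : MeasurableSet J) (hI0 : I ⊆ Set.Ioi 0)
  (hJπ : J ⊆ Set.Ioo (-π) π)
include hI hJ hI0 hJπ

lemma integrableOn_polarAmplitude (hg : IntegrableOn g (sector I J)) :
    IntegrableOn (polarAmplitude g) (I ×ˢ J) := by
  rw [sector_eq_image, integrableOn_image_iff_integrableOn_abs_det_fderiv_smul volume (hI.prod hJ)
    (fun p _ => (hasFDerivAt_polarCoord_symm p).hasFDerivWithinAt)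
    (polarCoord.symm.injOn.mono (Set.prod_mono hI0 hJπ))] at hg
  refine hg.congr_fun (fun p hp => ?_) (hI.prod hJ)
  have hp0 : 0 < p.1 := hI0 hp.1
  simp only [det_fderivPolarCoordSymm, abs_of_pos hp0, Complex.real_smul, polarAmplitude]

lemma coneExt_sector (x : EuclideanSpace ℝ (Fin 3)) :
    coneExt (sector I J) g x = ∫ p in I ×ˢ J, polarAmplitude g p * 𝐞 (conePhase x p) := by
  rw [coneExt, sector_eq_image, integral_image_eq_integral_abs_det_fderiv_smul volume (hI.prod hJ)
    (fun p _ => (hasFDerivAt_polarCoord_symm p).hasFDerivWithinAt)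
    (polarCoord.symm.injOn.mono (Set.prod_mono hI0 hJπ))]
  refine setIntegral_congr_fun (hI.prod hJ) fun p hp => ?_
  have hp0 : 0 < p.1 := hI0 hp.1
  simp only [det_fderivPolarCoordSymm, abs_of_pos hp0, Complex.real_smul, polarAmplitude,
    cexp_polarCoord_symm x hp0.le]
  rw [mul_assoc]

end

lemma integrableOn_polarAmplitude_mul {s : Set (ℝ × ℝ)} (hg : IntegrableOn (polarAmplitude g) s)
    (x : EuclideanSpace ℝ (Fin 3)) :
    IntegrableOn (fun p => polarAmplitude g p * 𝐞 (conePhase x p)) s :=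
  hg.mul_bdd (c := 1)
    ((continuous_subtype_val.comp continuous_fourierChar).measurable.comp
      (measurable_conePhase x)).aestronglyMeasurable
    (.of_forall fun _ => (Circle.norm_coe _).le)

lemma continuous_coneExt {S : Set (ℝ × ℝ)} (hg : IntegrableOn g S) : Continuous (coneExt S g) := by
  have hnorm (x : EuclideanSpace ℝ (Fin 3)) (ξ : ℝ × ℝ) :
      ‖Complex.exp (2 * π * Complex.I *
        (x 0 * ξ.1 + x 1 * ξ.2 + x 2 * √(ξ.1 ^ 2 + ξ.2 ^ 2)))‖ = 1 := by
    have := Complex.norm_exp_ofReal_mul_I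
      (2 * π * (x 0 * ξ.1 + x 1 * ξ.2 + x 2 * √(ξ.1 ^ 2 + ξ.2 ^ 2)))
    push_cast at this
    rwa [mul_right_comm] at this
  refine continuous_of_dominated (fun x => hg.1.mul ?_) (fun x => .of_forall fun ξ => ?_) hg.norm
    (.of_forall fun ξ => by fun_prop)
  · exact Continuous.aestronglyMeasurable (by fun_prop)
  · rw [norm_mul, hnorm, mul_one]

section Partition

variable (hI : MeasurableSet I) (hI0 : I ⊆ Set.Ioi 0)
include hI hI0

lemma coneExt_sector_Icc {α β : ℝ} (hα : -π < α) (hβ : β < π) (hαβ : α ≤ β)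
    (hg : IntegrableOn g (sector I (Set.Icc α β))) (x : EuclideanSpace ℝ (Fin 3)) :
    coneExt (sector I (Set.Icc α β)) g x =
      ∫ φ in α..β, ∫ r in I, polarAmplitude g (r, φ) * 𝐞 (conePhase x (r, φ)) := by
  have hJπ : Set.Icc α β ⊆ Set.Ioo (-π) π := Set.Icc_subset_Ioo hα hβ
  have hint := integrableOn_polarAmplitude_mul
    (integrableOn_polarAmplitude hI measurableSet_Icc hI0 hJπ hg) x
  rw [coneExt_sector hI measurableSet_Icc hI0 hJπ, intervalIntegral.integral_of_le hαβ,
    ← integral_Icc_eq_integral_Ioc, Measure.volume_eq_prod, ← Measure.prod_restrict]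
  rw [IntegrableOn, Measure.volume_eq_prod, ← Measure.prod_restrict] at hint
  exact integral_prod_symm _ hint

lemma coneExt_sector_eq_sum {a : ℕ → ℝ} (ha : Monotone a) {M : ℕ} (h0 : -π < a 0) (hM : a M < π)
    (hg : IntegrableOn g (sector I (Set.Icc (a 0) (a M)))) (x : EuclideanSpace ℝ (Fin 3)) :
    coneExt (sector I (Set.Icc (a 0) (a M))) g x =
      ∑ j ∈ Finset.range M, coneExt (sector I (Set.Icc (a j) (a (j + 1)))) g x := by
  have hint := integrableOn_polarAmplitude_mul
    (integrableOn_polarAmplitude hI measurableSet_Icc hI0 (Set.Icc_subset_Ioo h0 hM) hg) x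
  rw [IntegrableOn, Measure.volume_eq_prod, ← Measure.prod_restrict] at hint
  have hK : IntegrableOn (fun φ => ∫ r in I, polarAmplitude g (r, φ) * 𝐞 (conePhase x (r, φ)))
      (Set.Icc (a 0) (a M)) := hint.integral_prod_right
  have hsub {j : ℕ} (hj : j < M) : Set.Icc (a j) (a (j + 1)) ⊆ Set.Icc (a 0) (a M) :=
    Set.Icc_subset_Icc (ha (Nat.zero_le _)) (ha hj)
  rw [coneExt_sector_Icc hI hI0 h0 hM (ha (Nat.zero_le _)) hg,
    ← intervalIntegral.sum_integral_adjacent_intervals fun j hj =>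
      (intervalIntegrable_iff_integrableOn_Icc_of_le (ha j.le_succ)).2 (hK.mono_set (hsub hj))]
  refine Finset.sum_congr rfl fun j hj => (coneExt_sector_Icc hI hI0 ?_ ?_ (ha j.le_succ) ?_ x).symm
  · exact h0.trans_le (ha (Nat.zero_le _))
  · exact (ha (Finset.mem_range.1 hj)).trans_lt hM
  · exact hg.mono_set (sector_mono_right (hsub (Finset.mem_range.1 hj)))

end Partition

end Polar

/-! ## Spectra of sectors along a plane -/

section ConeSpectrum

open scoped FourierTransform Pointwise

lemma conePhase_add (x y : EuclideanSpace ℝ (Fin 3)) (p : ℝ × ℝ) :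
    conePhase (x + y) p = conePhase x p + conePhase y p := by
  simp only [conePhase, PiLp.add_apply]
  ring

lemma conePhase_smul (t : ℝ) (x : EuclideanSpace ℝ (Fin 3)) (p : ℝ × ℝ) :
    conePhase (t • x) p = t * conePhase x p := by
  simp only [conePhase, PiLp.smul_apply, smul_eq_mul]
  ring

lemma HasSpectrumIn.mono {F : ℝ × ℝ → ℂ} {T T' : Set (ℝ × ℝ)} (hF : HasSpectrumIn F T)
    (hT : T ⊆ T') : HasSpectrumIn F T' := by
  obtain ⟨Ω, _, m, _, h, Φ, hh, hΦ, hΦT, hF⟩ := hF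
  exact ⟨Ω, inferInstance, m, inferInstance, h, Φ, hh, hΦ, hΦT.mono fun _ hω => hT hω, hF⟩

lemma hasSpectrumIn_coneExt {I J : Set ℝ} (hI : MeasurableSet I) (hJ : MeasurableSet J)
    (hI0 : I ⊆ Set.Ioi 0) (hJπ : J ⊆ Set.Ioo (-π) π) {g : ℝ × ℝ → ℂ}
    (hg : IntegrableOn g (sector I J)) (x v₁ v₂ : EuclideanSpace ℝ (Fin 3)) :
    HasSpectrumIn (fun s => coneExt (sector I J) g (x + (s.1 • v₁ + s.2 • v₂)))
      ((fun p => (conePhase v₁ p, conePhase v₂ p)) '' I ×ˢ J) := by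
  refine ⟨ℝ × ℝ, inferInstance, volume.restrict (I ×ˢ J), inferInstance,
    fun p => polarAmplitude g p * 𝐞 (conePhase x p), fun p => (conePhase v₁ p, conePhase v₂ p),
    integrableOn_polarAmplitude_mul (integrableOn_polarAmplitude hI hJ hI0 hJπ hg) x,
    (measurable_conePhase v₁).prodMk (measurable_conePhase v₂),
    (ae_restrict_mem (hI.prod hJ)).mono fun p hp => ⟨p, hp, rfl⟩, fun s => ?_⟩
  simp only [coneExt_sector hI hJ hI0 hJπ, planeWave, conePhase_add, conePhase_smul,
    AddChar.map_add_eq_mul, Circle.coe_mul, mul_assoc]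

end ConeSpectrum

/-! ## Orthogonality for neighbourhoods of a parabola -/

section Parabola

open scoped FourierTransform Pointwise

/-- A box around the point of the parabola `ξ₂ = w²`, `w = ξ₁ / M`, with `w = j`, of bounded
dimensions in the variable `w` and in the direction transversal to the parabola. -/
def parabolaBox (M : ℝ) (j : ℤ) : Set (ℝ × ℝ) :=
  {ξ | |ξ.1 / M - j| ≤ 5 ∧ |ξ.2 - 2 * j * (ξ.1 / M) + (j : ℝ) ^ 2| ≤ 13}

-- The shear `ξ₂ ↦ ξ₂ - 2 b w + b²` moves the base point of the parabola from `0` to `b`.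
lemma abs_shear_sub_sq_le {M : ℝ} {j : ℤ} {ξ : ℝ × ℝ} (hξ : ξ ∈ parabolaBox M j) (b : ℤ) :
    |ξ.2 - 2 * b * (ξ.1 / M) + (b : ℝ) ^ 2 - ((j : ℝ) - b) ^ 2| ≤ 13 + 10 * |(j : ℝ) - b| := by
  have hsplit : ξ.2 - 2 * b * (ξ.1 / M) + (b : ℝ) ^ 2 - ((j : ℝ) - b) ^ 2 =
      (ξ.2 - 2 * j * (ξ.1 / M) + (j : ℝ) ^ 2) + 2 * ((j : ℝ) - b) * (ξ.1 / M - j) := by ring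
  rw [hsplit]
  refine (abs_add_le _ _).trans (add_le_add hξ.2 ?_)
  rw [abs_mul, abs_mul, abs_two]
  nlinarith [abs_nonneg ((j : ℝ) - b), hξ.1]

lemma one_lt_abs_of_mem_parabolaBox {M : ℝ} (hM : 0 < M) {a b c a' b' c' : ℤ} (hb0 : 0 ≤ b)
    (hbM : b ≤ M) (hgap : ((14 : ℕ) : ℤ) * (6 + |a - b| + |c - b| + |a' - b| + |b' - b| + |c' - b|)
      < |(a - b) ^ 2 + (c - b) ^ 2 - (a' - b) ^ 2 - (b' - b) ^ 2 - (c' - b) ^ 2|) {ξ : ℝ × ℝ}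
    (hξ : ξ ∈ parabolaBox M a + parabolaBox M b + parabolaBox M c +
      -(parabolaBox M a' + parabolaBox M b' + parabolaBox M c')) : 1 < |ξ.1| ∨ 1 < |ξ.2| := by
  obtain ⟨_, ⟨_, ⟨ξa, ha, ξb, hb, rfl⟩, ξc, hc, rfl⟩, ζ, hζ, rfl⟩ := hξ
  obtain ⟨_, ⟨ξa', ha', ξb', hb', rfl⟩, ξc', hc', hsum⟩ := hζ
  obtain rfl : ζ = -(ξa' + ξb' + ξc') := by rw [← neg_neg ζ, ← hsum]
  obtain ⟨la, ua⟩ := abs_le.1 (abs_shear_sub_sq_le ha b)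
  obtain ⟨lb, ub⟩ := abs_le.1 (abs_shear_sub_sq_le hb b)
  obtain ⟨lc, uc⟩ := abs_le.1 (abs_shear_sub_sq_le hc b)
  obtain ⟨la', ua'⟩ := abs_le.1 (abs_shear_sub_sq_le ha' b)
  obtain ⟨lb', ub'⟩ := abs_le.1 (abs_shear_sub_sq_le hb' b)
  obtain ⟨lc', uc'⟩ := abs_le.1 (abs_shear_sub_sq_le hc' b)
  have hgap' : (14 : ℝ) * (6 + |(a : ℝ) - b| + |(c : ℝ) - b| + |(a' : ℝ) - b| + |(b' : ℝ) - b|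
      + |(c' : ℝ) - b|) < |((a : ℝ) - b) ^ 2 + ((c : ℝ) - b) ^ 2 - ((a' : ℝ) - b) ^ 2
        - ((b' : ℝ) - b) ^ 2 - ((c' : ℝ) - b) ^ 2| := by exact_mod_cast hgap
  by_contra! hsmall
  simp only [Prod.fst_add, Prod.snd_add, Prod.fst_neg, Prod.snd_neg] at hsmall
  obtain ⟨h₁, h₂⟩ := hsmall
  have hbM1 : |(b : ℝ) / M| ≤ 1 := by
    rw [abs_of_nonneg (by positivity)]
    exact div_le_one_of_le₀ hbM hM.le
  have hbw := mul_le_one₀ hbM1 (abs_nonneg _) h₁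
  rw [← abs_mul, show b / M * (ξa.1 + ξb.1 + ξc.1 + -(ξa'.1 + ξb'.1 + ξc'.1)) =
    b * (ξa.1 / M) + b * (ξb.1 / M) + b * (ξc.1 / M) - b * (ξa'.1 / M) - b * (ξb'.1 / M)
      - b * (ξc'.1 / M) by ring] at hbw
  obtain ⟨lw, uw⟩ := abs_le.1 hbw
  obtain ⟨l₂, u₂⟩ := abs_le.1 h₂
  rw [sub_self, abs_zero] at lb ub
  have na := abs_nonneg ((a : ℝ) - b)
  have nc := abs_nonneg ((c : ℝ) - b)
  have na' := abs_nonneg ((a' : ℝ) - b)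
  have nb' := abs_nonneg ((b' : ℝ) - b)
  have nc' := abs_nonneg ((c' : ℝ) - b)
  refine absurd hgap' (not_lt.2 (abs_le.2 ⟨?_, ?_⟩)) <;> linarith

lemma parabolicallyOrthogonalOn_of_hasSpectrumIn {κ : Measure ℝ} [IsFiniteMeasure κ]
    (hκ : ∀ u : ℝ, 1 < |u| → ∫ s, (𝐞 (s * u) : ℂ) ∂κ = 0) {M : ℕ} {f : ℤ → ℝ × ℝ → ℂ}
    (hf : ∀ j ∈ window 0 M, HasSpectrumIn (f j) (parabolaBox M j)) :
    ParabolicallyOrthogonalOn (κ.prod κ) 14 f (window 0 M) := by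
  intro a ha b hb c hc a' ha' b' hb' c' hc' hgap
  have hspec := ((((hf a ha).mul (hf b hb)).mul (hf c hc)).mul
    (((hf a' ha').mul (hf b' hb')).mul (hf c' hc')).conj)
  obtain ⟨hb0, hbM⟩ := mem_window.1 hb
  rw [zero_add] at hbM
  refine hspec.integral_eq_zero hκ fun ξ hξ => one_lt_abs_of_mem_parabolaBox ?_ hb0 ?_ hgap hξ
  · exact_mod_cast hb0.trans_lt hbM
  · exact_mod_cast hbM.le

end Parabola

/-! ## A short sector seen in a moving frame -/

section Frame

/-- The unit tangent direction to the circle at the angle `φ`, in the plane `x 2 = 0`. -/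
def angularVector (φ : ℝ) : EuclideanSpace ℝ (Fin 3) := !₂[-sin φ, cos φ, 0]

/-- A normal vector of the cone along the ray with angle `φ`. -/
def coneNormal (φ : ℝ) : EuclideanSpace ℝ (Fin 3) := !₂[-cos φ, -sin φ, 1]

lemma conePhase_angularVector (φ : ℝ) (p : ℝ × ℝ) :
    conePhase (angularVector φ) p = p.1 * sin (p.2 - φ) := by
  rw [sin_sub]
  simp only [conePhase, angularVector, PiLp.toLp_apply, Matrix.cons_val]
  ring

lemma conePhase_coneNormal (φ : ℝ) (p : ℝ × ℝ) :
    conePhase (coneNormal φ) p = p.1 * (1 - cos (p.2 - φ)) := by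
  rw [cos_sub]
  simp only [conePhase, coneNormal, PiLp.toLp_apply, Matrix.cons_val]
  ring

lemma norm_angularVector (φ : ℝ) : ‖angularVector φ‖ = 1 := by
  simp [EuclideanSpace.norm_eq, Fin.sum_univ_three, angularVector]

lemma norm_coneNormal (φ : ℝ) : ‖coneNormal φ‖ = √2 := by
  simp [EuclideanSpace.norm_eq, Fin.sum_univ_three, coneNormal]
  norm_num

lemma abs_mul_sub_le {a X T K : ℝ} (ha : 1 ≤ a) (hX : 0 ≤ X) (hXT : X ≤ T) (haT : (a - 1) * T ≤ K)
    (hTX : T - X ≤ K) : |a * X - T| ≤ K := by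
  rw [abs_le]
  constructor <;> nlinarith

lemma sub_pow_three_le_sin {ψ : ℝ} (hψ : 0 ≤ ψ) : ψ - ψ ^ 3 ≤ sin ψ := by
  rcases hψ.eq_or_lt with rfl | hψ
  · simp
  · linarith [sin_gt_sub_cube hψ, pow_pos hψ 3]

lemma sq_sub_pow_four_le_one_sub_cos {ψ : ℝ} (hψ : |ψ| ≤ 1) :
    ψ ^ 2 - ψ ^ 4 ≤ 2 * (1 - cos ψ) := by
  have h := (abs_le.1 (cos_bound hψ)).2
  rw [Even.pow_abs (by decide)] at h
  nlinarith [pow_nonneg (sq_nonneg ψ) 2]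

/-- A sector of radial width `h` and aperture `M * δ`, starting at radius `r₀` and angle `φ₀`, that
is so short and narrow that its `M` angular pieces of aperture `δ` lie in boxes around the
points of a parabola, in a frame adapted to `φ₀`. -/
structure IsShortSector (M : ℕ) (r₀ h φ₀ δ : ℝ) : Prop where
  one_le : 1 ≤ M
  pos : 0 < δ
  aperture_le : M * δ ≤ 1
  sq_mul_le : (M : ℝ) ^ 2 * δ ≤ 2
  one_le_radius : 1 ≤ r₀
  width_le : h * (M : ℝ) ^ 2 ≤ 4
  neg_pi_lt : -π < φ₀
  lt_pi : φ₀ + M * δ < π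

lemma abs_sin_sub_le {M δ a ψ : ℝ} (hM : 0 ≤ M) (hδ : 0 < δ) (hMδ : M * δ ≤ 1)
    (hM2δ : M ^ 2 * δ ≤ 2) (ha : 1 ≤ a) (haM : (a - 1) * M ^ 2 ≤ 4) (hψ0 : 0 ≤ ψ) (hψ : ψ ≤ M * δ) :
    |a * (M / δ * sin ψ) - M / δ * ψ| ≤ 4 := by
  have hcube : M / δ * ψ ^ 3 ≤ 4 := calc
    M / δ * ψ ^ 3 ≤ M / δ * (M * δ) ^ 3 := by gcongr
    _ = (M ^ 2 * δ) ^ 2 := by field_simp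
    _ ≤ 2 ^ 2 := by gcongr
    _ = 4 := by norm_num
  refine abs_mul_sub_le ha ?_ ?_ ?_ ?_
  · exact mul_nonneg (by positivity) (sin_nonneg_of_nonneg_of_le_pi hψ0 (by linarith [pi_gt_three]))
  · gcongr
    exact sin_le hψ0
  · calc (a - 1) * (M / δ * ψ) ≤ (a - 1) * (M / δ * (M * δ)) := by
          have : 0 ≤ a - 1 := by linarith
          gcongr
      _ = (a - 1) * M ^ 2 := by field_simp
      _ ≤ 4 := haM
  · calc M / δ * ψ - M / δ * sin ψ ≤ M / δ * ψ - M / δ * (ψ - ψ ^ 3) := by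
          gcongr
          exact sub_pow_three_le_sin hψ0
      _ = M / δ * ψ ^ 3 := by ring
      _ ≤ 4 := hcube

lemma abs_one_sub_cos_sub_le {M δ a ψ : ℝ} (hδ : 0 < δ) (hMδ : M * δ ≤ 1)
    (hM2δ : M ^ 2 * δ ≤ 2) (ha : 1 ≤ a) (haM : (a - 1) * M ^ 2 ≤ 4) (hψ0 : 0 ≤ ψ) (hψ : ψ ≤ M * δ) :
    |a * (2 / δ ^ 2 * (1 - cos ψ)) - (ψ / δ) ^ 2| ≤ 4 := by
  have hquartic : ψ ^ 4 / δ ^ 2 ≤ 4 := calc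
    ψ ^ 4 / δ ^ 2 ≤ (M * δ) ^ 4 / δ ^ 2 := by gcongr
    _ = (M ^ 2 * δ) ^ 2 := by field_simp
    _ ≤ 2 ^ 2 := by gcongr
    _ = 4 := by norm_num
  refine abs_mul_sub_le ha ?_ ?_ ?_ ?_
  · exact mul_nonneg (by positivity) (sub_nonneg.2 (cos_le_one ψ))
  · rw [div_mul_eq_mul_div, div_pow]
    gcongr
    linarith [one_sub_sq_div_two_le_cos (x := ψ)]
  · calc (a - 1) * (ψ / δ) ^ 2 ≤ (a - 1) * (M * δ / δ) ^ 2 := by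
          have : 0 ≤ a - 1 := by linarith
          gcongr
      _ = (a - 1) * M ^ 2 := by field_simp
      _ ≤ 4 := haM
  · calc (ψ / δ) ^ 2 - 2 / δ ^ 2 * (1 - cos ψ) = (ψ ^ 2 - 2 * (1 - cos ψ)) / δ ^ 2 := by ring
      _ ≤ ψ ^ 4 / δ ^ 2 := by
          gcongr
          have := sq_sub_pow_four_le_one_sub_cos (abs_le.2 ⟨by linarith, hψ.trans hMδ⟩)
          linarith
      _ ≤ 4 := hquartic

lemma mem_parabolaBox {M δ a ψ : ℝ} {j : ℤ} (hM : 1 ≤ M) (hδ : 0 < δ) (hMδ : M * δ ≤ 1)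
    (hM2δ : M ^ 2 * δ ≤ 2) (ha : 1 ≤ a) (haM : (a - 1) * M ^ 2 ≤ 4) (hj0 : 0 ≤ j)
    (hjM : (j : ℝ) + 1 ≤ M) (hψ : ψ ∈ Set.Icc (j * δ) ((j + 1) * δ)) :
    (M / δ * (a * sin ψ), 2 / δ ^ 2 * (a * (1 - cos ψ))) ∈ parabolaBox M j := by
  have hj0' : (0 : ℝ) ≤ j := by exact_mod_cast hj0
  have hψ0 : 0 ≤ ψ := (by positivity : 0 ≤ j * δ).trans hψ.1
  have hψM : ψ ≤ M * δ := hψ.2.trans (by gcongr)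
  have hsin := abs_sin_sub_le (by linarith) hδ hMδ hM2δ ha haM hψ0 hψM
  have hcos := abs_one_sub_cos_sub_le hδ hMδ hM2δ ha haM hψ0 hψM
  set w := M / δ * (a * sin ψ) / M with hw
  have hMw : M * |w - ψ / δ| ≤ 4 := by
    have hM0 : 0 < M := by linarith
    calc M * |w - ψ / δ| = |M * (w - ψ / δ)| := by rw [abs_mul, abs_of_pos hM0]
      _ = |a * (M / δ * sin ψ) - M / δ * ψ| := by
        rw [hw]
        congr 1
        field_simp
      _ ≤ 4 := hsin
  have hwψ : |w - ψ / δ| ≤ 4 := by nlinarith [abs_nonneg (w - ψ / δ)]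
  have hjw : |j * (w - ψ / δ)| ≤ 4 := by
    rw [abs_mul, abs_of_nonneg hj0']
    nlinarith [abs_nonneg (w - ψ / δ)]
  have hψj : |ψ / δ - j| ≤ 1 := by
    have h₁ : j ≤ ψ / δ := (le_div_iff₀ hδ).2 hψ.1
    have h₂ : ψ / δ ≤ j + 1 := (div_le_iff₀ hδ).2 hψ.2
    exact abs_le.2 ⟨by linarith, by linarith⟩
  have hsq : (ψ / δ - j) ^ 2 ≤ 1 := (sq_le_one_iff_abs_le_one _).2 hψj
  constructor
  · change |w - j| ≤ 5
    linarith [abs_sub_le w (ψ / δ) j]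
  · change |2 / δ ^ 2 * (a * (1 - cos ψ)) - 2 * j * w + (j : ℝ) ^ 2| ≤ 13
    rw [abs_le] at hcos hjw ⊢
    constructor <;> nlinarith [sq_nonneg (ψ / δ - j), hcos.1, hcos.2, hjw.1, hjw.2]

namespace IsShortSector

variable {M : ℕ} {r₀ h φ₀ δ : ℝ} (hS : IsShortSector M r₀ h φ₀ δ)
include hS

lemma radii_subset : Set.Icc r₀ (r₀ + h) ⊆ Set.Ioi 0 :=
  fun _ hr => zero_lt_one.trans_le (hS.one_le_radius.trans hr.1)

end IsShortSector

end Frame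

/-! ## Decoupling along a plane -/

section LocalDecoupling

open scoped FourierTransform

/-- The `t`-th piece of aperture `δ` of a sector with radii in `[r₀, r₀ + h]` and initial
angle `φ₀`. -/
def angularPiece (r₀ h φ₀ δ t : ℝ) : Set (ℝ × ℝ) :=
  sector (Set.Icc r₀ (r₀ + h)) (Set.Icc (φ₀ + t * δ) (φ₀ + (t + 1) * δ))

/-- The parametrization of the plane through `0` spanned by `angularVector φ₀` and `coneNormal φ₀`
which rescales the frequencies of `angularPiece r₀ h φ₀ δ j` to `parabolaBox M j`. -/
def frameShift (M r₀ φ₀ δ : ℝ) (s : ℝ × ℝ) : EuclideanSpace ℝ (Fin 3) :=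
  s.1 • (M / (δ * r₀)) • angularVector φ₀ + s.2 • (2 / (δ ^ 2 * r₀)) • coneNormal φ₀

lemma lintegral_enorm_pow_six {X : Type*} [MeasurableSpace X] {W : Measure X} {F : X → ℂ}
    (hF : MemLp F 6 W) : ∫⁻ x, ‖F x‖ₑ ^ 6 ∂W = ENNReal.ofReal (∫ x, ‖F x‖ ^ 6 ∂W) := by
  rw [ofReal_integral_eq_lintegral_ofReal (hF.integrable_norm_pow (p := 6) (by norm_num))
    (.of_forall fun x => by positivity)]
  simp only [ENNReal.ofReal_pow (norm_nonneg _), ofReal_norm]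

namespace IsShortSector

variable {M : ℕ} {r₀ h φ₀ δ : ℝ} (hS : IsShortSector M r₀ h φ₀ δ)
include hS

lemma Icc_piece_subset {j : ℤ} (hj : j ∈ window 0 M) :
    Set.Icc (φ₀ + j * δ) (φ₀ + (j + 1) * δ) ⊆ Set.Icc φ₀ (φ₀ + M * δ) := by
  obtain ⟨hj0, hjM⟩ := mem_window.1 hj
  have hδ := hS.pos
  have hjM' : (j : ℝ) + 1 ≤ M := by exact_mod_cast (zero_add (M : ℤ) ▸ hjM : j < (M : ℤ))
  exact Set.Icc_subset_Icc (le_add_of_nonneg_right (by positivity)) (by gcongr)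

lemma hasSpectrumIn_angularPiece {g : ℝ × ℝ → ℂ}
    (hg : IntegrableOn g (sector (Set.Icc r₀ (r₀ + h)) (Set.Icc φ₀ (φ₀ + M * δ))))
    (x : EuclideanSpace ℝ (Fin 3)) {j : ℤ} (hj : j ∈ window 0 M) :
    HasSpectrumIn (fun s => coneExt (angularPiece r₀ h φ₀ δ j) g (x + frameShift M r₀ φ₀ δ s))
      (parabolaBox M j) := by
  have hsub := hS.Icc_piece_subset hj
  refine (hasSpectrumIn_coneExt measurableSet_Icc measurableSet_Icc hS.radii_subset
    (hsub.trans (Set.Icc_subset_Ioo hS.neg_pi_lt hS.lt_pi)) (hg.mono_set (sector_mono_right hsub))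
    x _ _).mono ?_
  rintro _ ⟨⟨r, φ⟩, ⟨hr, hφ⟩, rfl⟩
  obtain ⟨hj0, hjM⟩ := mem_window.1 hj
  have hM : (1 : ℝ) ≤ M := by exact_mod_cast hS.one_le
  have hr₀ : 0 < r₀ := zero_lt_one.trans_le hS.one_le_radius
  have hrM : (r / r₀ - 1) * (M : ℝ) ^ 2 ≤ 4 := by
    have hrh : r / r₀ - 1 ≤ h := by
      rw [div_sub_one hr₀.ne', div_le_iff₀ hr₀]
      nlinarith [hS.one_le_radius, hr.1, hr.2]
    exact (mul_le_mul_of_nonneg_right hrh (sq_nonneg _)).trans hS.width_le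
  convert mem_parabolaBox (a := r / r₀) (ψ := φ - φ₀) hM hS.pos hS.aperture_le hS.sq_mul_le
    ((one_le_div hr₀).2 hr.1) hrM hj0 (by exact_mod_cast (zero_add (M : ℤ) ▸ hjM : j < (M : ℤ)))
    ⟨by linarith [hφ.1], by linarith [hφ.2]⟩ using 2
  · rw [conePhase_smul, conePhase_angularVector]
    ring
  · rw [conePhase_smul, conePhase_coneNormal]
    ring

lemma coneExt_eq_sum_window {g : ℝ × ℝ → ℂ}
    (hg : IntegrableOn g (sector (Set.Icc r₀ (r₀ + h)) (Set.Icc φ₀ (φ₀ + M * δ))))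
    (x : EuclideanSpace ℝ (Fin 3)) :
    coneExt (sector (Set.Icc r₀ (r₀ + h)) (Set.Icc φ₀ (φ₀ + M * δ))) g x =
      ∑ j ∈ Finset.range M, coneExt (angularPiece r₀ h φ₀ δ j) g x := by
  have hmono : Monotone fun j : ℕ => φ₀ + j * δ := fun i j hij => by
    have hδ := hS.pos
    have hij' : (i : ℝ) ≤ j := by exact_mod_cast hij
    dsimp only
    gcongr
  have hsum := coneExt_sector_eq_sum measurableSet_Icc hS.radii_subset hmono (M := M) (g := g)
  simp only [Nat.cast_zero, zero_mul, add_zero, Nat.cast_add, Nat.cast_one] at hsum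
  exact hsum hS.neg_pi_lt hS.lt_pi hg x

end IsShortSector

lemma sum_window_zero {A : Type*} [AddCommMonoid A] (u : ℤ → A) (M : ℕ) :
    ∑ j ∈ window 0 M, u j = ∑ j ∈ Finset.range M, u j := by
  refine Finset.sum_nbij' Int.toNat Nat.cast ?_ ?_ ?_ ?_ ?_ <;> grind [mem_window]

lemma lintegral_enorm_sum_window_pow_six_le {X : Type*} [MeasurableSpace X] {W : Measure X}
    {f : ℤ → X → ℂ} {M : ℕ} {K : ℝ} (hK : 0 ≤ K) (hf : ∀ j ∈ window 0 M, MemLp (f j) 6 W)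
    (h : ∫ x, ‖∑ j ∈ window 0 M, f j x‖ ^ 6 ∂W ≤ K * energy W f (window 0 M) ^ 3) :
    ∫⁻ x, ‖∑ j ∈ window 0 M, f j x‖ₑ ^ 6 ∂W ≤
      ENNReal.ofReal K * (∑ j ∈ window 0 M, (∫⁻ x, ‖f j x‖ₑ ^ 6 ∂W) ^ (1 / 3 : ℝ)) ^ 3 := by
  have hpiece : ∑ j ∈ window 0 M, (∫⁻ x, ‖f j x‖ₑ ^ 6 ∂W) ^ (1 / 3 : ℝ) =
      ENNReal.ofReal (energy W f (window 0 M)) := by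
    rw [energy, ENNReal.ofReal_sum_of_nonneg fun j _ => by positivity]
    refine Finset.sum_congr rfl fun j hj => ?_
    rw [lintegral_enorm_pow_six (hf j hj),
      ENNReal.ofReal_rpow_of_nonneg (by positivity) (by norm_num)]
  rw [lintegral_enorm_pow_six (memLp_finsetSum _ hf), hpiece,
    ← ENNReal.ofReal_pow (energy_nonneg _), ← ENNReal.ofReal_mul hK]
  exact ENNReal.ofReal_le_ofReal h

theorem exists_local_decoupling {κ : Measure ℝ} [IsFiniteMeasure κ]
    (hκ : ∀ u : ℝ, 1 < |u| → ∫ s, (𝐞 (s * u) : ℂ) ∂κ = 0) {η : ℝ} (hη : 0 < η) :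
    ∃ C > 0, ∀ {M : ℕ} {r₀ h φ₀ δ : ℝ}, IsShortSector M r₀ h φ₀ δ → ∀ {g : ℝ × ℝ → ℂ},
      IntegrableOn g (sector (Set.Icc r₀ (r₀ + h)) (Set.Icc φ₀ (φ₀ + M * δ))) → ∀ x,
        ∫⁻ s, ‖coneExt (sector (Set.Icc r₀ (r₀ + h)) (Set.Icc φ₀ (φ₀ + M * δ))) g
            (x + frameShift M r₀ φ₀ δ s)‖ₑ ^ 6 ∂(κ.prod κ) ≤
          ENNReal.ofReal (C * (M : ℝ) ^ η) * (∑ j ∈ Finset.range M,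
            (∫⁻ s, ‖coneExt (angularPiece r₀ h φ₀ δ j) g (x + frameShift M r₀ φ₀ δ s)‖ₑ ^ 6
              ∂(κ.prod κ)) ^ (1 / 3 : ℝ)) ^ 3 := by
  obtain ⟨C, hC, hdec⟩ := exists_parabolic_decoupling 14 hη
  refine ⟨C, hC, fun {M r₀ h φ₀ δ} hS g hg x => ?_⟩
  have hspec := fun j hj => hS.hasSpectrumIn_angularPiece hg x (j := j) hj
  have hLp := fun j hj => (hspec j hj).memLp (κ.prod κ) 6
  have hreal := hdec hS.one_le hLp (parabolicallyOrthogonalOn_of_hasSpectrumIn hκ hspec)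
  have hle := lintegral_enorm_sum_window_pow_six_le (by positivity) hLp hreal
  simpa only [sum_window_zero, hS.coneExt_eq_sum_window hg, Int.cast_natCast] using hle

end LocalDecoupling

/-! ## Averaging over translations -/

section Averaging

lemma lintegral_sum_rpow_rpow_le {X ι : Type*} [MeasurableSpace X] (m : Measure X) {p : ℝ}
    (hp : 1 ≤ p) {a : ι → X → ℝ≥0∞} {I : Finset ι} (ha : ∀ j ∈ I, Measurable (a j)) :
    ∫⁻ y, (∑ j ∈ I, a j y ^ (1 / p)) ^ p ∂m ≤ (∑ j ∈ I, (∫⁻ y, a j y ∂m) ^ (1 / p)) ^ p := by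
  have hp0 : p ≠ 0 := by positivity
  have hmink := ENNReal.rpow_le_rpow (eLpNorm'_sum_le (μ := m)
    (fun j hj => ((ha j hj).pow_const (1 / p)).aestronglyMeasurable) hp) (by positivity : 0 ≤ p)
  simpa only [eLpNorm', enorm_eq_self, Finset.sum_apply, ← ENNReal.rpow_mul,
    one_div_mul_cancel hp0, ENNReal.rpow_one] using hmink

variable {E S : Type*} [AddGroup E] [MeasurableSpace E] [MeasurableAdd₂ E] [MeasurableSub₂ E]
  [MeasurableSpace S] {μ : Measure E} [SFinite μ] [μ.IsAddRightInvariant] {W : Measure S}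
  [SFinite W] {V : S → E} {w : E → ℝ≥0∞} (hV : Measurable V) (hw : Measurable w)
include hV hw

lemma lintegral_mul_lintegral_add_eq {φ : E → ℝ≥0∞} (hφ : Measurable φ) :
    ∫⁻ y, w y * ∫⁻ s, φ (y + V s) ∂W ∂μ = ∫⁻ y, φ y * ∫⁻ s, w (y - V s) ∂W ∂μ := by
  have hleft : ∀ y, w y * ∫⁻ s, φ (y + V s) ∂W = ∫⁻ s, w y * φ (y + V s) ∂W := fun y =>
    (lintegral_const_mul _ (by fun_prop)).symm
  have hright : ∀ y, φ y * ∫⁻ s, w (y - V s) ∂W = ∫⁻ s, φ y * w (y - V s) ∂W := fun y =>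
    (lintegral_const_mul _ (by fun_prop)).symm
  simp only [hleft, hright]
  rw [lintegral_lintegral_swap (by fun_prop),
    lintegral_lintegral_swap (f := fun y s => φ y * w (y - V s)) (by fun_prop)]
  refine lintegral_congr fun s => ?_
  rw [← lintegral_add_right_eq_self (fun y => φ y * w (y - V s)) (V s)]
  simp only [add_sub_cancel_right, mul_comm]

lemma lintegral_mul_le_of_translation_averages {A B K : ℝ≥0∞}
    (hA : ∀ x, ∫⁻ s, w (x - V s) ∂W ≤ A * w x) (hB : ∀ x, B * w x ≤ ∫⁻ s, w (x - V s) ∂W)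
    {p : ℝ} (hp : 1 ≤ p) {ι : Type*} {I : Finset ι} {φ : E → ℝ≥0∞} {a : ι → E → ℝ≥0∞}
    (hφ : Measurable φ) (ha : ∀ j ∈ I, Measurable (a j))
    (hloc : ∀ x, ∫⁻ s, φ (x + V s) ∂W ≤
      K * (∑ j ∈ I, (∫⁻ s, a j (x + V s) ∂W) ^ (1 / p)) ^ p) :
    B * ∫⁻ x, φ x * w x ∂μ ≤ K * (A * (∑ j ∈ I, (∫⁻ x, a j x * w x ∂μ) ^ (1 / p)) ^ p) := by
  have hp0 : 0 < p := by positivity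
  have hmeas : ∀ j ∈ I, Measurable fun y => ∫⁻ s, a j (y + V s) ∂W := fun j hj =>
    Measurable.lintegral_prod_right' (f := fun q : E × S => a j (q.1 + V q.2))
      ((ha j hj).comp (by fun_prop))
  have hsum : Measurable fun y => (∑ j ∈ I, (∫⁻ s, a j (y + V s) ∂W) ^ (1 / p)) ^ p :=
    (Finset.measurable_fun_sum _ fun j hj => (hmeas j hj).pow_const _).pow_const _
  have hpiece : ∀ j ∈ I, ∫⁻ y, w y * ∫⁻ s, a j (y + V s) ∂W ∂μ ≤ A * ∫⁻ x, a j x * w x ∂μ := by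
    intro j hj
    rw [lintegral_mul_lintegral_add_eq hV hw (ha j hj)]
    refine le_of_le_of_eq ?_ (lintegral_const_mul A ((ha j hj).mul hw))
    exact lintegral_mono fun x => (mul_le_mul_right (hA x) _).trans_eq (mul_left_comm _ _ _)
  calc B * ∫⁻ x, φ x * w x ∂μ = ∫⁻ x, φ x * (B * w x) ∂μ := by
        refine (lintegral_const_mul B (hφ.mul hw)).symm.trans ?_
        exact lintegral_congr fun x => mul_left_comm _ _ _
    _ ≤ ∫⁻ x, φ x * ∫⁻ s, w (x - V s) ∂W ∂μ := by gcongr with x; exact hB x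
    _ = ∫⁻ y, w y * ∫⁻ s, φ (y + V s) ∂W ∂μ := (lintegral_mul_lintegral_add_eq hV hw hφ).symm
    _ ≤ ∫⁻ y, w y * (K * (∑ j ∈ I, (∫⁻ s, a j (y + V s) ∂W) ^ (1 / p)) ^ p) ∂μ := by
        gcongr with y; exact hloc y
    _ = K * ∫⁻ y, (∑ j ∈ I, (∫⁻ s, a j (y + V s) ∂W) ^ (1 / p)) ^ p ∂μ.withDensity w := by
        rw [lintegral_withDensity_eq_lintegral_mul _ hw hsum, ← lintegral_const_mul _ (hw.mul hsum)]
        exact lintegral_congr fun y => mul_left_comm _ _ _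
    _ ≤ K * (∑ j ∈ I, (∫⁻ y, ∫⁻ s, a j (y + V s) ∂W ∂μ.withDensity w) ^ (1 / p)) ^ p := by
        gcongr
        exact lintegral_sum_rpow_rpow_le _ hp hmeas
    _ ≤ K * (∑ j ∈ I, (A * ∫⁻ x, a j x * w x ∂μ) ^ (1 / p)) ^ p := by
        gcongr with j hj
        rw [lintegral_withDensity_eq_lintegral_mul _ hw (hmeas j hj)]
        exact hpiece j hj
    _ = K * (A * (∑ j ∈ I, (∫⁻ x, a j x * w x ∂μ) ^ (1 / p)) ^ p) := by
        simp only [ENNReal.mul_rpow_of_nonneg _ _ (one_div_nonneg.2 hp0.le)]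
        rw [← Finset.mul_sum, ENNReal.mul_rpow_of_nonneg _ _ hp0.le, ← ENNReal.rpow_mul,
          one_div_mul_cancel hp0.ne', ENNReal.rpow_one]

end Averaging

section PolyWeight

variable {E : Type*} [NormedAddCommGroup E]

/-- The weight `(1 + |x - c| / N) ^ (-k)`, essentially the indicator of a ball of radius `N`. -/
def polyWeight (k : ℕ) (c : E) (N : ℝ) (x : E) : ℝ≥0∞ :=
  ENNReal.ofReal ((1 + dist x c / N) ^ (-(k : ℝ)))

/-- The factor by which `polyWeight k` can change under a translation by a vector of the form
`s.1 • v₁ + s.2 • v₂` with `‖v₁‖, ‖v₂‖ ≤ R * N`. -/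
def shiftCost (k : ℕ) (R : ℝ) (s : ℝ × ℝ) : ℝ≥0∞ :=
  ENNReal.ofReal ((1 + R * |s.1|) ^ k) * ENNReal.ofReal ((1 + R * |s.2|) ^ k)

lemma measurable_polyWeight [MeasurableSpace E] [OpensMeasurableSpace E] (k : ℕ) (c : E) (N : ℝ) :
    Measurable (polyWeight k c N) := by
  unfold polyWeight
  fun_prop

lemma measurable_shiftCost (k : ℕ) (R : ℝ) : Measurable (shiftCost k R) := by
  unfold shiftCost
  fun_prop

lemma one_le_shiftCost (k : ℕ) {R : ℝ} (hR : 0 ≤ R) (s : ℝ × ℝ) : 1 ≤ shiftCost k R s := by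
  have h : ∀ t : ℝ, 1 ≤ ENNReal.ofReal ((1 + R * |t|) ^ k) := fun t =>
    ENNReal.one_le_ofReal.2 (one_le_pow₀ (le_add_of_nonneg_right (by positivity)))
  exact one_le_mul (h s.1) (h s.2)

lemma shiftCost_ne_top (k : ℕ) (R : ℝ) (s : ℝ × ℝ) : shiftCost k R s ≠ ∞ :=
  ENNReal.mul_ne_top ENNReal.ofReal_ne_top ENNReal.ofReal_ne_top

lemma lintegral_shiftCost_prod_ne_top {κ : Measure ℝ} [SFinite κ] {k : ℕ} {R : ℝ}
    (h : ∫⁻ s, ENNReal.ofReal ((1 + R * |s|) ^ k) ∂κ < ∞) :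
    ∫⁻ s, shiftCost k R s ∂(κ.prod κ) ≠ ∞ := by
  unfold shiftCost
  rw [lintegral_prod_mul (f := fun s => ENNReal.ofReal ((1 + R * |s|) ^ k))
    (g := fun s => ENNReal.ofReal ((1 + R * |s|) ^ k)) (by fun_prop) (by fun_prop)]
  exact (ENNReal.mul_lt_top h h).ne

lemma lintegral_inv_shiftCost_ne_zero {W : Measure (ℝ × ℝ)} (hW : W ≠ 0) (k : ℕ) (R : ℝ) :
    ∫⁻ s, (shiftCost k R s)⁻¹ ∂W ≠ 0 := by
  rw [ne_eq, lintegral_eq_zero_iff (measurable_shiftCost k R).fun_inv]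
  intro h
  refine hW (ae_eq_bot.1 (Filter.eventually_false_iff_eq_bot.1 (h.mono fun s hs => ?_)))
  exact shiftCost_ne_top k R s (ENNReal.inv_eq_zero.1 hs)

lemma lintegral_inv_shiftCost_ne_top (W : Measure (ℝ × ℝ)) [IsFiniteMeasure W] (k : ℕ) {R : ℝ}
    (hR : 0 ≤ R) : ∫⁻ s, (shiftCost k R s)⁻¹ ∂W ≠ ∞ := by
  refine ((lintegral_mono fun s => ENNReal.inv_le_one.2 (one_le_shiftCost k hR s)).trans_lt ?_).ne
  rw [lintegral_one]
  exact measure_lt_top W _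

lemma polyWeight_sub_le (k : ℕ) (c : E) {N : ℝ} (hN : 0 < N) (x z : E) :
    polyWeight k c N (x - z) ≤ ENNReal.ofReal ((1 + ‖z‖ / N) ^ k) * polyWeight k c N x := by
  have hdist : dist x c / N ≤ ‖z‖ / N + dist (x - z) c / N := by
    rw [← add_div]
    gcongr
    simpa only [dist_eq_norm, sub_sub_cancel] using dist_triangle x (x - z) c
  have hprod : 0 ≤ ‖z‖ / N * (dist (x - z) c / N) := by positivity
  have hle : (1 + ‖z‖ / N)⁻¹ * (1 + dist x c / N) ≤ 1 + dist (x - z) c / N := by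
    rw [inv_mul_le_iff₀ (by positivity)]
    linarith
  rw [polyWeight, polyWeight, ← ENNReal.ofReal_mul (by positivity)]
  refine ENNReal.ofReal_le_ofReal ((rpow_le_rpow_of_nonpos (by positivity) hle
    (neg_nonpos.2 k.cast_nonneg)).trans_eq ?_)
  rw [mul_rpow (by positivity) (by positivity), inv_rpow (by positivity), rpow_neg (by positivity),
    inv_inv, rpow_natCast]

section Shift

variable [NormedSpace ℝ E] (k : ℕ) (c : E) {N R : ℝ} (hN : 0 < N) {v₁ v₂ : E}
  (h₁ : ‖v₁‖ ≤ R * N) (h₂ : ‖v₂‖ ≤ R * N)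
include hN h₁ h₂

lemma ofReal_one_add_norm_div_pow_le_shiftCost (s : ℝ × ℝ) :
    ENNReal.ofReal ((1 + ‖s.1 • v₁ + s.2 • v₂‖ / N) ^ k) ≤ shiftCost k R s := by
  have hR : 0 ≤ R := nonneg_of_mul_nonneg_left ((norm_nonneg v₁).trans h₁) hN
  rw [shiftCost, ← ENNReal.ofReal_mul (by positivity), ← mul_pow]
  refine ENNReal.ofReal_le_ofReal (pow_le_pow_left₀ (by positivity) ?_ k)
  have hnorm : ‖s.1 • v₁ + s.2 • v₂‖ ≤ (R * |s.1| + R * |s.2|) * N := calc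
    ‖s.1 • v₁ + s.2 • v₂‖ ≤ |s.1| * ‖v₁‖ + |s.2| * ‖v₂‖ := by
      simpa only [norm_smul, Real.norm_eq_abs] using norm_add_le (s.1 • v₁) (s.2 • v₂)
    _ ≤ |s.1| * (R * N) + |s.2| * (R * N) := by gcongr
    _ = (R * |s.1| + R * |s.2|) * N := by ring
  have hprod : 0 ≤ R * |s.1| * (R * |s.2|) := by positivity
  linarith [(div_le_iff₀ hN).2 hnorm]

lemma lintegral_polyWeight_sub_le (W : Measure (ℝ × ℝ)) (x : E) :
    ∫⁻ s, polyWeight k c N (x - (s.1 • v₁ + s.2 • v₂)) ∂W ≤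
      (∫⁻ s, shiftCost k R s ∂W) * polyWeight k c N x := by
  rw [← lintegral_mul_const _ (measurable_shiftCost k R)]
  refine lintegral_mono fun s => (polyWeight_sub_le k c hN x _).trans ?_
  gcongr
  exact ofReal_one_add_norm_div_pow_le_shiftCost k hN h₁ h₂ s

lemma mul_polyWeight_le_lintegral_sub (W : Measure (ℝ × ℝ)) (x : E) :
    (∫⁻ s, (shiftCost k R s)⁻¹ ∂W) * polyWeight k c N x ≤
      ∫⁻ s, polyWeight k c N (x - (s.1 • v₁ + s.2 • v₂)) ∂W := by
  have hR : 0 ≤ R := nonneg_of_mul_nonneg_left ((norm_nonneg v₁).trans h₁) hN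
  rw [← lintegral_mul_const _ (measurable_shiftCost k R).fun_inv]
  refine lintegral_mono fun s => (ENNReal.inv_mul_le_iff
    (zero_lt_one.trans_le (one_le_shiftCost k hR s)).ne' (shiftCost_ne_top k R s)).2 ?_
  have hshift := polyWeight_sub_le k c hN (x - (s.1 • v₁ + s.2 • v₂)) (-(s.1 • v₁ + s.2 • v₂))
  rw [norm_neg, sub_neg_eq_add, sub_add_cancel] at hshift
  refine hshift.trans ?_
  gcongr
  exact ofReal_one_add_norm_div_pow_le_shiftCost k hN h₁ h₂ s

variable [MeasurableSpace E] [BorelSpace E] [SecondCountableTopology E] {μ : Measure E} [SFinite μ]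
  [μ.IsAddRightInvariant]

lemma lintegral_mul_polyWeight_le {W : Measure (ℝ × ℝ)} [IsFiniteMeasure W] (hW : W ≠ 0)
    {p : ℝ} (hp : 1 ≤ p) {ι : Type*} {I : Finset ι} {φ : E → ℝ≥0∞} {a : ι → E → ℝ≥0∞}
    (hφ : Measurable φ) (ha : ∀ j ∈ I, Measurable (a j)) {K : ℝ≥0∞}
    (hloc : ∀ x, ∫⁻ s, φ (x + (s.1 • v₁ + s.2 • v₂)) ∂W ≤
      K * (∑ j ∈ I, (∫⁻ s, a j (x + (s.1 • v₁ + s.2 • v₂)) ∂W) ^ (1 / p)) ^ p) :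
    ∫⁻ x, φ x * polyWeight k c N x ∂μ ≤
      K * ((∫⁻ s, shiftCost k R s ∂W) / (∫⁻ s, (shiftCost k R s)⁻¹ ∂W) *
        (∑ j ∈ I, (∫⁻ x, a j x * polyWeight k c N x ∂μ) ^ (1 / p)) ^ p) := by
  have hR : 0 ≤ R := nonneg_of_mul_nonneg_left ((norm_nonneg v₁).trans h₁) hN
  have hle := lintegral_mul_le_of_translation_averages (μ := μ) (W := W)
    (V := fun s : ℝ × ℝ => s.1 • v₁ + s.2 • v₂) (by fun_prop) (measurable_polyWeight k c N)
    (lintegral_polyWeight_sub_le k c hN h₁ h₂ W) (mul_polyWeight_le_lintegral_sub k c hN h₁ h₂ W)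
    hp hφ ha hloc
  rw [mul_comm, ← ENNReal.le_div_iff_mul_le (.inl (lintegral_inv_shiftCost_ne_zero hW k R))
    (.inl (lintegral_inv_shiftCost_ne_top W k hR))] at hle
  exact hle.trans_eq (by simp only [div_eq_mul_inv]; ring)

end Shift

end PolyWeight

/-! ## Decoupling a short sector -/

section Decoupling

lemma wNorm6_eq (F : EuclideanSpace ℝ (Fin 3) → ℂ) (c : EuclideanSpace ℝ (Fin 3)) (N : ℝ) :
    wNorm6 F c N = (∫⁻ x, ‖F x‖ₑ ^ 6 * polyWeight 30 c N x) ^ (1 / 6 : ℝ) := by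
  simp only [wNorm6, polyWeight, enorm_eq_nnnorm, ENNReal.rpow_ofNat, Nat.cast_ofNat]

lemma wNorm6_sq (F : EuclideanSpace ℝ (Fin 3) → ℂ) (c : EuclideanSpace ℝ (Fin 3)) (N : ℝ) :
    wNorm6 F c N ^ 2 = (∫⁻ x, ‖F x‖ₑ ^ 6 * polyWeight 30 c N x) ^ (1 / 3 : ℝ) := by
  rw [wNorm6_eq, ← ENNReal.rpow_mul_natCast]
  norm_num

lemma sixth_root_mul_cube {A : ℝ} (hA : 0 ≤ A) (T : ℝ≥0∞) :
    (ENNReal.ofReal A * T ^ (3 : ℝ)) ^ (1 / 6 : ℝ) =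
      ENNReal.ofReal (A ^ (1 / 6 : ℝ)) * T ^ (1 / 2 : ℝ) := by
  rw [ENNReal.mul_rpow_of_nonneg _ _ (by norm_num), ENNReal.ofReal_rpow_of_nonneg hA (by norm_num),
    ← ENNReal.rpow_mul]
  norm_num

namespace IsShortSector

variable {M : ℕ} {r₀ h φ₀ δ : ℝ} (hS : IsShortSector M r₀ h φ₀ δ)
include hS

lemma norm_smul_angularVector_le : ‖(M / (δ * r₀)) • angularVector φ₀‖ ≤ 3 / δ ^ 2 := by
  have hδ := hS.pos
  have hr₀ := zero_lt_one.trans_le hS.one_le_radius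
  rw [norm_smul, norm_angularVector, mul_one, Real.norm_of_nonneg (by positivity),
    div_le_div_iff₀ (by positivity) (by positivity)]
  calc M * δ ^ 2 = M * δ * δ := by ring
    _ ≤ 1 * δ := by gcongr; exact hS.aperture_le
    _ ≤ 3 * (δ * r₀) := by nlinarith [hS.one_le_radius]

lemma norm_smul_coneNormal_le : ‖(2 / (δ ^ 2 * r₀)) • coneNormal φ₀‖ ≤ 3 / δ ^ 2 := by
  have hδ := hS.pos
  have hr₀ := zero_lt_one.trans_le hS.one_le_radius
  have hsqrt : 2 * √2 ≤ 3 := by nlinarith [Real.sq_sqrt (zero_le_two (α := ℝ)), sqrt_nonneg (2 : ℝ)]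
  rw [norm_smul, norm_coneNormal, Real.norm_of_nonneg (by positivity), div_mul_eq_mul_div]
  gcongr
  exact le_mul_of_one_le_right (by positivity) hS.one_le_radius

lemma measurable_enorm_coneExt_piece {g : ℝ × ℝ → ℂ}
    (hg : IntegrableOn g (sector (Set.Icc r₀ (r₀ + h)) (Set.Icc φ₀ (φ₀ + M * δ)))) {j : ℕ}
    (hj : j ∈ Finset.range M) :
    Measurable fun x => ‖coneExt (angularPiece r₀ h φ₀ δ j) g x‖ₑ ^ 6 := by
  have hj' : (j : ℤ) ∈ window 0 M := by grind [mem_window]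
  exact (continuous_coneExt (hg.mono_set
    (sector_mono_right (hS.Icc_piece_subset hj')))).measurable.enorm.pow_const 6

end IsShortSector

theorem exists_wNorm6_coneExt_le {η : ℝ} (hη : 0 < η) :
    ∃ C > 0, ∀ {M : ℕ} {r₀ h φ₀ δ : ℝ}, IsShortSector M r₀ h φ₀ δ → ∀ {g : ℝ × ℝ → ℂ},
      IntegrableOn g (sector (Set.Icc r₀ (r₀ + h)) (Set.Icc φ₀ (φ₀ + M * δ))) →
      ∀ {N : ℝ}, 0 < N → 1 / δ ^ 2 ≤ 4 * N → ∀ c,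
        wNorm6 (coneExt (sector (Set.Icc r₀ (r₀ + h)) (Set.Icc φ₀ (φ₀ + M * δ))) g) c N ≤
          ENNReal.ofReal (C * (M : ℝ) ^ η) * (∑ j ∈ Finset.range M,
            wNorm6 (coneExt (angularPiece r₀ h φ₀ δ j) g) c N ^ 2) ^ (1 / 2 : ℝ) := by
  obtain ⟨κ, _, hκ0, hκ, hmoment⟩ := exists_measure_integral_fourierChar_eq_zero
  obtain ⟨C, hC, hlocal⟩ := exists_local_decoupling hκ (by positivity : 0 < 6 * η)
  have hW : κ.prod κ ≠ 0 := by
    rw [ne_eq, ← Measure.measure_univ_eq_zero, ← Set.univ_prod_univ, Measure.prod_prod]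
    simpa using hκ0
  set Q := (∫⁻ s, shiftCost 30 12 s ∂κ.prod κ) / ∫⁻ s, (shiftCost 30 12 s)⁻¹ ∂κ.prod κ
  have hQtop : Q ≠ ∞ := ENNReal.div_ne_top
    (lintegral_shiftCost_prod_ne_top (hmoment 12 (by norm_num) 30))
    (lintegral_inv_shiftCost_ne_zero hW 30 12)
  have hQle : Q ≤ ENNReal.ofReal (Q.toReal + 1) :=
    (ENNReal.ofReal_toReal hQtop).symm.trans_le (ENNReal.ofReal_le_ofReal (by linarith))
  refine ⟨(C * (Q.toReal + 1)) ^ (1 / 6 : ℝ), by positivity,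
    fun {M r₀ h φ₀ δ} hS g hg N hN hδN c => ?_⟩
  have hscale : 3 / δ ^ 2 ≤ 12 * N := by
    rw [show 3 / δ ^ 2 = 3 * (1 / δ ^ 2) by ring]
    linarith
  have hglobal := lintegral_mul_polyWeight_le (μ := volume) (p := 3) 30 c hN
    (hS.norm_smul_angularVector_le.trans hscale) (hS.norm_smul_coneNormal_le.trans hscale) hW
    (by norm_num) ((continuous_coneExt hg).measurable.enorm.pow_const 6)
    (fun j hj => hS.measurable_enorm_coneExt_piece hg hj)
    (fun x => by simpa only [ENNReal.rpow_ofNat, frameShift] using hlocal hS hg x)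
  simp only [← wNorm6_sq] at hglobal
  rw [wNorm6_eq]
  set T := ∑ j ∈ Finset.range M, wNorm6 (coneExt (angularPiece r₀ h φ₀ δ j) g) c N ^ 2
  calc _ ≤ (ENNReal.ofReal (C * (M : ℝ) ^ (6 * η)) * (Q * T ^ (3 : ℝ))) ^ (1 / 6 : ℝ) := by
        gcongr
    _ ≤ (ENNReal.ofReal (C * (M : ℝ) ^ (6 * η) * (Q.toReal + 1)) * T ^ (3 : ℝ)) ^ (1 / 6 : ℝ) := by
        rw [ENNReal.ofReal_mul (p := C * (M : ℝ) ^ (6 * η)) (by positivity), mul_assoc]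
        gcongr
    _ = _ := by
        rw [sixth_root_mul_cube (by positivity), mul_right_comm,
          Real.mul_rpow (by positivity) (by positivity), ← Real.rpow_mul (by positivity)]
        ring_nf

lemma isCompact_sector {I J : Set ℝ} (hI : IsCompact I) (hJ : IsCompact J) :
    IsCompact (sector I J) := by
  rw [sector_eq_image]
  exact (hI.prod hJ).image continuous_polarCoord_symm

section Ceil

variable {N ν μ : ℝ} (hN : 1 ≤ N) (hν : 0 ≤ ν)
include hN hν

lemma natCeil_rpow_half_le : (⌈N ^ (ν / 2)⌉₊ : ℝ) ≤ 2 * N ^ (ν / 2) := by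
  have hone : 1 ≤ N ^ (ν / 2) := Real.one_le_rpow hN (by positivity)
  linarith [Nat.ceil_lt_add_one (zero_le_one.trans hone)]

lemma natCeil_rpow_half_sq_le : (⌈N ^ (ν / 2)⌉₊ : ℝ) ^ 2 ≤ 4 * N ^ ν := calc
  (⌈N ^ (ν / 2)⌉₊ : ℝ) ^ 2 ≤ (2 * N ^ (ν / 2)) ^ 2 := by
    gcongr
    exact natCeil_rpow_half_le hN hν
  _ = 4 * N ^ ν := by
    rw [mul_pow, ← Real.rpow_mul_natCast (by positivity)]
    norm_num

lemma isShortSector_natCeil (hνμ : ν ≤ 2 * μ) {r₀ φ₀ : ℝ} (hr₀ : 1 ≤ r₀) (hφ₀ : -π < φ₀)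
    (hφ : φ₀ + N ^ (-μ) < π) :
    IsShortSector ⌈N ^ (ν / 2)⌉₊ r₀ (N ^ (-ν)) φ₀ (N ^ (-μ) / ⌈N ^ (ν / 2)⌉₊) := by
  have hN0 : 0 < N := by positivity
  have hM0 : 0 < ⌈N ^ (ν / 2)⌉₊ := Nat.ceil_pos.2 (by positivity)
  have hM : (0 : ℝ) < ⌈N ^ (ν / 2)⌉₊ := by exact_mod_cast hM0
  have hMδ : (⌈N ^ (ν / 2)⌉₊ : ℝ) * (N ^ (-μ) / ⌈N ^ (ν / 2)⌉₊) = N ^ (-μ) :=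
    mul_div_cancel₀ _ hM.ne'
  refine ⟨hM0, by positivity, ?_, ?_, hr₀, ?_, hφ₀, hMδ.symm ▸ hφ⟩
  · rw [hMδ]
    exact Real.rpow_le_one_of_one_le_of_nonpos hN (by linarith)
  · calc (⌈N ^ (ν / 2)⌉₊ : ℝ) ^ 2 * (N ^ (-μ) / ⌈N ^ (ν / 2)⌉₊)
        = ⌈N ^ (ν / 2)⌉₊ * N ^ (-μ) := by rw [sq, mul_assoc, hMδ]
      _ ≤ 2 * N ^ (ν / 2) * N ^ (-μ) := by
          gcongr
          exact natCeil_rpow_half_le hN hν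
      _ = 2 * N ^ (ν / 2 - μ) := by rw [mul_assoc, ← Real.rpow_add hN0, sub_eq_add_neg]
      _ ≤ 2 * 1 := by
          gcongr
          exact Real.rpow_le_one_of_one_le_of_nonpos hN (by linarith)
      _ = 2 := mul_one 2
  · calc N ^ (-ν) * (⌈N ^ (ν / 2)⌉₊ : ℝ) ^ 2 ≤ N ^ (-ν) * (4 * N ^ ν) := by
          gcongr
          exact natCeil_rpow_half_sq_le hN hν
      _ = 4 := by rw [mul_left_comm, ← Real.rpow_add hN0, neg_add_cancel, Real.rpow_zero, mul_one]

lemma one_div_sq_aperture_le (hμν : 2 * μ + ν ≤ 1) :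
    1 / (N ^ (-μ) / ⌈N ^ (ν / 2)⌉₊) ^ 2 ≤ 4 * N := by
  have hN0 : 0 < N := by positivity
  calc 1 / (N ^ (-μ) / ⌈N ^ (ν / 2)⌉₊) ^ 2 = (⌈N ^ (ν / 2)⌉₊ : ℝ) ^ 2 * N ^ (2 * μ) := by
        rw [div_pow, one_div_div, div_eq_mul_inv, Real.rpow_neg hN0.le, inv_pow, inv_inv,
          ← Real.rpow_mul_natCast hN0.le, mul_comm μ, Nat.cast_ofNat]
    _ ≤ 4 * N ^ ν * N ^ (2 * μ) := by
        gcongr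
        exact natCeil_rpow_half_sq_le hN hν
    _ = 4 * N ^ (2 * μ + ν) := by rw [mul_assoc, ← Real.rpow_add hN0, add_comm]
    _ ≤ 4 * N := by
        gcongr
        exact Real.rpow_le_self_of_one_le hN hμν

end Ceil

end Decoupling

end ConeDecoupling

open ConeDecoupling

theorem cone_sector_decoupling_step_general {ε : ℝ} (hε : 0 < ε) :
    ∃ C > 0, ∀ {ν μ : ℝ}, 0 ≤ ν → 2 * μ + ν ≤ 1 → ν ≤ 2 * μ → ∀ {N : ℝ}, 1 ≤ N →
      ∀ {r₀ φ₀ : ℝ}, 1 ≤ r₀ → -π < φ₀ → φ₀ + N ^ (-μ) < π → ∀ {g : ℝ × ℝ → ℂ},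
        IntegrableOn g (sector (Set.Icc r₀ (r₀ + N ^ (-ν))) (Set.Icc φ₀ (φ₀ + N ^ (-μ)))) → ∀ c,
          wNorm6 (coneExt (sector (Set.Icc r₀ (r₀ + N ^ (-ν)))
              (Set.Icc φ₀ (φ₀ + N ^ (-μ)))) g) c N ≤
            ENNReal.ofReal (C * N ^ (ν * ε)) *
              (∑ j ∈ Finset.range ⌈N ^ (ν / 2)⌉₊,
                wNorm6 (coneExt (sector (Set.Icc r₀ (r₀ + N ^ (-ν)))
                    (Set.Icc (φ₀ + (j : ℝ) * (N ^ (-μ) / (⌈N ^ (ν / 2)⌉₊ : ℝ)))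
                      (φ₀ + ((j : ℝ) + 1) * (N ^ (-μ) / (⌈N ^ (ν / 2)⌉₊ : ℝ))))) g) c N ^
                  2) ^ (1 / 2 : ℝ) := by
  obtain ⟨C, hC, hdec⟩ := exists_wNorm6_coneExt_le (η := 2 * ε) (by positivity)
  refine ⟨C * 2 ^ (2 * ε), by positivity,
    fun {ν μ} hν hμν hνμ {N} hN {r₀ φ₀} hr₀ hφ₀ hφ {g} hg c => ?_⟩
  have hN0 : 0 < N := by positivity
  have hM : (0 : ℝ) < ⌈N ^ (ν / 2)⌉₊ := by exact_mod_cast Nat.ceil_pos.2 (by positivity)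
  have hMδ : (⌈N ^ (ν / 2)⌉₊ : ℝ) * (N ^ (-μ) / ⌈N ^ (ν / 2)⌉₊) = N ^ (-μ) :=
    mul_div_cancel₀ _ hM.ne'
  have hloss : (⌈N ^ (ν / 2)⌉₊ : ℝ) ^ (2 * ε) ≤ 2 ^ (2 * ε) * N ^ (ν * ε) := calc
    (⌈N ^ (ν / 2)⌉₊ : ℝ) ^ (2 * ε) ≤ (2 * N ^ (ν / 2)) ^ (2 * ε) := by
      gcongr
      exact natCeil_rpow_half_le hN hν
    _ = 2 ^ (2 * ε) * N ^ (ν * ε) := by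
      rw [Real.mul_rpow zero_le_two (by positivity), ← Real.rpow_mul hN0.le]
      ring_nf
  have hstep := hdec (isShortSector_natCeil hN hν hνμ hr₀ hφ₀ hφ) (hMδ.symm ▸ hg) hN0
    (one_div_sq_aperture_le hN hν hμν) c
  simp only [hMδ, angularPiece] at hstep
  refine hstep.trans ?_
  gcongr ENNReal.ofReal ?_ * _
  rw [mul_assoc]
  gcongr

theorem cone_sector_decoupling_step (ν μ : ℝ) (hν : 0 < ν) (hμ : 0 < μ)
    (h1 : 2 * μ + ν ≤ 1) (h2 : ν ≤ 2 * μ) :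
    ∀ ε > (0 : ℝ), ∃ C > (0 : ℝ), ∀ N : ℝ, 1 < N →
      ∀ r₀ φ₀ : ℝ, 1 ≤ r₀ → r₀ + N ^ (-ν) ≤ 2 →
        -(Real.pi / 2) < φ₀ → φ₀ + N ^ (-μ) < Real.pi / 2 →
        ∀ g : ℝ × ℝ → ℂ, Measurable g → (∃ M : ℝ, ∀ ξ, ‖g ξ‖ ≤ M) →
          ∀ c : EuclideanSpace ℝ (Fin 3),
            wNorm6 (coneExt (sector (Set.Icc r₀ (r₀ + N ^ (-ν)))
                (Set.Icc φ₀ (φ₀ + N ^ (-μ)))) g) c N ≤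
              ENNReal.ofReal (C * N ^ (ν * ε)) *
                (∑ j ∈ Finset.range ⌈N ^ (ν / 2)⌉₊,
                  wNorm6 (coneExt (sector (Set.Icc r₀ (r₀ + N ^ (-ν)))
                      (Set.Icc (φ₀ + (j : ℝ) * (N ^ (-μ) / (⌈N ^ (ν / 2)⌉₊ : ℝ)))
                        (φ₀ + ((j : ℝ) + 1) * (N ^ (-μ) / (⌈N ^ (ν / 2)⌉₊ : ℝ))))) g) c N ^
                    2) ^ (1 / 2 : ℝ) := by
  intro ε hε
  obtain ⟨C, hC, hdec⟩ := cone_sector_decoupling_step_general hε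
  refine ⟨C, hC, fun N hN r₀ φ₀ hr₀ _ hφ₀ hφ g hg ⟨B, hB⟩ c => ?_⟩
  have hint : IntegrableOn g (sector (Set.Icc r₀ (r₀ + N ^ (-ν))) (Set.Icc φ₀ (φ₀ + N ^ (-μ)))) :=
    Measure.integrableOn_of_bounded
      (isCompact_sector isCompact_Icc isCompact_Icc).measure_lt_top.ne
      hg.aestronglyMeasurable (.of_forall hB)
  exact hdec hν.le h1 h2 hN.le hr₀ (by linarith [pi_pos]) (by linarith [pi_pos]) hint c

end
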